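/- arXiv:2301.07744 — 2 statements merged into one kernel-verified Lean document; each statement's English description precedes it below -/
import Mathlib

section
/- (Marstrand) If K ⊂ ℝ² is a Borel set with Hausdorff dimension strictly greater than 1, then for Lebesgue-almost every θ ∈ ℝ, the orthogonal projection of K onto the line L_θ through the origin in direction (cos θ, sin θ) has positive one-dimensional Lebesgue measure. -/
open MeasureTheory

/-!
Suppose that the projections of `K` are null for a set of directions of positive measure. The
part of the set of pairs `(θ, proj θ z)`, `z ∈ K`, lying over these directions is null by
Fubini, so it is contained in an open set `G` of small area; then every `z ∈ K` satisfies
`(θ, proj θ z) ∈ G` for more than a fixed amount `δ` of directions `θ`.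

The set `U` of all points `z` with this property is open, hence a union of dyadic cubes.
Distributing mass greedily over those in a unit cube produces an absolutely continuous Frostman
measure `μ` on `U` of exponent `s > 1` whose mass is at least the `s`-dimensional content of
that part of `U`. In polar coordinates around each point, the square integral of the Radon
transform of `μ` is at most a constant times the energy `∬ |z - y|⁻¹ dμ dμ`, which is `O(μ U)`.
Cauchy–Schwarz on `G` then gives `(δ * μ U) ^ 2 ≤ C * |G| * μ U`, so the content of `K` is at
most `C * |G| / δ ^ 2`. Letting `|G| → 0` shows that `K` has zero `s`-dimensional Hausdorff
measure for every `s ∈ (1, 2]`.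
-/

namespace Marstrand

open Set Filter Topology ProbabilityTheory
open scoped ENNReal Real

section AnalyticSet

variable {X : Type*} [MeasurableSpace X]

theorem exists_lt_measure_image_pi_Iio (μ : Measure X) (f : (ℕ → ℕ) → X) {c : ℝ≥0∞}
    (hc : c < μ (range f)) :
    ∃ N : ℕ → ℕ, ∀ n, c < μ (f '' (Iio n).pi fun i => Iic (N i)) := by
  have exists_bound (E : {E : Set (ℕ → ℕ) // c < μ (f '' E)}) (n : ℕ) :
      ∃ m : ℕ, c < μ (f '' (E.1 ∩ {x | x n ≤ m})) := by
    have hmono : Monotone fun m : ℕ => f '' (E.1 ∩ {x | x n ≤ m}) := fun _ _ h =>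
      image_mono (inter_subset_inter_right _ fun _ hx => le_trans hx h)
    have hunion : ⋃ m : ℕ, {x : ℕ → ℕ | x n ≤ m} = univ :=
      iUnion_eq_univ_iff.2 fun x => ⟨x n, by simp⟩
    have hE := E.2
    rwa [← inter_univ E.1, ← hunion, inter_iUnion, image_iUnion, hmono.measure_iUnion,
      lt_iSup_iff] at hE
  choose m hm using exists_bound
  let E : ℕ → {E : Set (ℕ → ℕ) // c < μ (f '' E)} := fun n =>
    Nat.rec ⟨univ, by rwa [image_univ]⟩ (fun n E => ⟨E.1 ∩ {x | x n ≤ m E n}, hm E n⟩) n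
  refine ⟨fun n => m (E n) n, fun n => (E n).2.trans_le (measure_mono (image_mono ?_))⟩
  induction n with
  | zero => exact fun x _ i hi => absurd hi (Nat.not_lt_zero i)
  | succ n ih =>
    rintro x ⟨hx, hxn⟩ i hi
    rcases Nat.lt_succ_iff_lt_or_eq.1 hi with h | rfl
    exacts [ih hx i h, hxn]

theorem exists_pi_Iio_subset_of_pi_univ_subset {N : ℕ → ℕ} {W : Set (ℕ → ℕ)} (hW : IsOpen W)
    (hNW : (univ.pi fun i => Iic (N i)) ⊆ W) : ∃ n, ((Iio n).pi fun i => Iic (N i)) ⊆ W := by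
  have hcompact : IsCompact (univ.pi fun i => Iic (N i)) :=
    isCompact_univ_pi fun i => (finite_Iic (N i)).isCompact
  by_contra! hcon
  choose x hx hxW using fun n => not_subset.1 (hcon n)
  obtain ⟨y, hy, φ, hφ, hlim⟩ := hcompact.tendsto_subseq (x := fun n i => min (x n i) (N i))
    fun n i _ => mem_Iic.2 (min_le_right _ _)
  have hlim' : Tendsto (x ∘ φ) atTop (𝓝 y) := by
    rw [tendsto_pi_nhds] at hlim ⊢
    refine fun i => (hlim i).congr' ?_
    filter_upwards [eventually_gt_atTop i] with n hn
    exact min_eq_left (hx (φ n) i (hn.trans_le (hφ.id_le n)))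
  obtain ⟨n, hn⟩ := (hlim'.eventually (hW.mem_nhds (hNW hy))).exists
  exact hxW _ hn

variable [TopologicalSpace X]

theorem exists_isCompact_subset_range_le_measure (μ : Measure X) [μ.OuterRegular]
    {f : (ℕ → ℕ) → X} (hf : Continuous f) {c : ℝ≥0∞} (hc : c < μ (range f)) :
    ∃ C ⊆ range f, IsCompact C ∧ c ≤ μ C := by
  obtain ⟨N, hN⟩ := exists_lt_measure_image_pi_Iio μ f hc
  refine ⟨f '' univ.pi fun i => Iic (N i), image_subset_range _ _,
    (isCompact_univ_pi fun i => (finite_Iic (N i)).isCompact).image hf, ?_⟩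
  rw [Set.measure_eq_iInf_isOpen]
  refine le_iInf₂ fun V hV => le_iInf fun hVo => ?_
  obtain ⟨n, hn⟩ := exists_pi_Iio_subset_of_pi_univ_subset (hVo.preimage hf)
    (image_subset_iff.1 hV)
  exact (hN n).le.trans (measure_mono (image_subset_iff.2 hn))

theorem nullMeasurableSet_of_analyticSet [TopologicalSpace.MetrizableSpace X] [BorelSpace X]
    (μ : Measure X) [SFinite μ] {A : Set X} (hA : AnalyticSet A) : NullMeasurableSet A μ := by
  suffices NullMeasurableSet A μ.toFinite from this.mono_ac (absolutelyContinuous_toFinite μ)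
  rw [AnalyticSet] at hA
  obtain rfl | ⟨f, hf, rfl⟩ := hA
  · exact .empty
  rcases eq_zero_or_pos (μ.toFinite (range f)) with h0 | hpos
  · exact .of_null h0
  obtain ⟨c, -, hc, hlim⟩ := exists_seq_strictMono_tendsto' hpos
  choose C hCf hC hcC using fun n => exists_isCompact_subset_range_le_measure μ.toFinite hf (hc n).2
  have hmeas : MeasurableSet (⋃ n, C n) := .iUnion fun n => (hC n).measurableSet
  refine hmeas.nullMeasurableSet.congr (ae_eq_of_subset_of_measure_ge (iUnion_subset hCf) ?_
    hmeas.nullMeasurableSet (measure_ne_top _ _))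
  exact le_of_tendsto' hlim fun n => (hcC n).trans (measure_mono (subset_iUnion _ _))

end AnalyticSet

section DyadicCube

theorem ofReal_inv_two_pow (k : ℕ) : ENNReal.ofReal (2 ^ k)⁻¹ = 2⁻¹ ^ k := by
  rw [← inv_pow, ENNReal.ofReal_pow (by positivity), ENNReal.ofReal_inv_of_pos two_pos,
    ENNReal.ofReal_ofNat]

theorem abs_floor_sub_floor_le_one {a b : ℝ} (h : |a - b| ≤ 1) : |⌊a⌋ - ⌊b⌋| ≤ 1 := by
  have floor_le {x y : ℝ} (h : x - y ≤ 1) : ⌊x⌋ ≤ ⌊y⌋ + 1 := by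
    rw [← Int.floor_add_one]
    exact Int.floor_le_floor (by linarith)
  rw [abs_le] at h ⊢
  have h₁ := floor_le h.2
  have h₂ := floor_le (x := b) (y := a) (by linarith)
  omega

variable {ι : Type*}

/-- The integer position of the level-`k` dyadic cube containing `x`. -/
noncomputable def dyadicIndex (k : ℕ) (x : ι → ℝ) : ι → ℤ := fun i => ⌊2 ^ k * x i⌋

/-- The half-open dyadic cube of level `q.1` (side length `2 ^ (-q.1)`) and integer position `q.2`;
the pairs `q` index the dyadic cubes of side at most one. -/
def dyadicCube (q : ℕ × (ι → ℤ)) : Set (ι → ℝ) := dyadicIndex q.1 ⁻¹' {q.2}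

theorem mem_dyadicCube {q : ℕ × (ι → ℤ)} {x : ι → ℝ} :
    x ∈ dyadicCube q ↔ dyadicIndex q.1 x = q.2 := Iff.rfl

theorem mem_dyadicCube_dyadicIndex (k : ℕ) (x : ι → ℝ) : x ∈ dyadicCube (k, dyadicIndex k x) := rfl

theorem dyadicIndex_eq_div_of_le {k l : ℕ} (hkl : k ≤ l) (x : ι → ℝ) :
    dyadicIndex k x = fun i => dyadicIndex l x i / 2 ^ (l - k) := by
  funext i
  have h : (2 : ℝ) ^ k * x i = 2 ^ l * x i / (2 ^ (l - k) : ℕ) := by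
    rw [← Nat.sub_add_cancel hkl, pow_add]
    simp
    field_simp
  simp only [dyadicIndex, h, Int.floor_div_natCast]
  push_cast
  rfl

theorem dyadicCube_subset_of_mem {q r : ℕ × (ι → ℤ)} {x : ι → ℝ} (h : q.1 ≤ r.1)
    (hq : x ∈ dyadicCube q) (hr : x ∈ dyadicCube r) : dyadicCube r ⊆ dyadicCube q := by
  intro y hy
  rw [mem_dyadicCube] at hq hr hy ⊢
  rw [← hq, dyadicIndex_eq_div_of_le h y, dyadicIndex_eq_div_of_le h x, hr, hy]

theorem dyadicCube_eq_pi (q : ℕ × (ι → ℤ)) : dyadicCube q =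
    univ.pi fun i => Ico ((q.2 i : ℝ) / 2 ^ q.1) ((q.2 i + 1) / 2 ^ q.1) := by
  ext x
  have h : (0 : ℝ) < 2 ^ q.1 := by positivity
  simp only [mem_dyadicCube, funext_iff, dyadicIndex, Int.floor_eq_iff, mem_univ_pi, mem_Ico,
    div_le_iff₀ h, lt_div_iff₀ h, mul_comm]

theorem dyadicCube_nonempty (q : ℕ × (ι → ℤ)) : (dyadicCube q).Nonempty :=
  ⟨fun i => q.2 i / 2 ^ q.1, by simp [dyadicCube_eq_pi, div_lt_div_iff_of_pos_right]⟩

theorem exists_pairwiseDisjoint_dyadicCube (S : Set (ℕ × (ι → ℤ))) :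
    ∃ T ⊆ S, T.PairwiseDisjoint dyadicCube ∧ ⋃ q ∈ T, dyadicCube q = ⋃ q ∈ S, dyadicCube q := by
  refine ⟨{q ∈ S | ∀ r ∈ S, r.1 < q.1 → ¬dyadicCube q ⊆ dyadicCube r}, sep_subset _ _, ?_,
    (biUnion_subset_biUnion_left (sep_subset _ _)).antisymm ?_⟩
  · rintro q ⟨hqS, hq⟩ r ⟨hrS, hr⟩ hne
    refine disjoint_left.2 fun x hxq hxr => hne ?_
    rcases lt_trichotomy q.1 r.1 with h | h | h
    · exact absurd (dyadicCube_subset_of_mem h.le hxq hxr) (hr q hqS h)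
    · rw [mem_dyadicCube] at hxq hxr
      exact Prod.ext h (by rw [← hxq, ← hxr, h])
    · exact absurd (dyadicCube_subset_of_mem h.le hxr hxq) (hq r hrS h)
  · intro x hx
    obtain ⟨q, ⟨hqS, hxq⟩, hmin⟩ := exists_minimalFor_of_wellFoundedLT
      (fun q => q ∈ S ∧ x ∈ dyadicCube q) Prod.fst (by simpa using hx)
    refine mem_biUnion ⟨hqS, fun r hrS hlt hqr => ?_⟩ hxq
    exact hlt.not_ge (hmin ⟨hrS, hqr hxq⟩ hlt.le)

/-- The indices of the dyadic cubes of side at most one containing `dyadicCube q`. The level is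
recorded because it is not determined by the cube when `ι` is empty. -/
def dyadicAncestors (q : ℕ × (ι → ℤ)) : Set (ℕ × (ι → ℤ)) :=
  {r | r.1 ≤ q.1 ∧ dyadicCube q ⊆ dyadicCube r}

theorem self_mem_dyadicAncestors (q : ℕ × (ι → ℤ)) : q ∈ dyadicAncestors q := ⟨le_rfl, Subset.rfl⟩

theorem disjoint_or_mem_dyadicAncestors (q r : ℕ × (ι → ℤ)) :
    Disjoint (dyadicCube q) (dyadicCube r) ∨ q ∈ dyadicAncestors r ∨ r ∈ dyadicAncestors q := by
  rw [or_iff_not_imp_left, not_disjoint_iff]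
  rintro ⟨x, hq, hr⟩
  exact (le_total q.1 r.1).imp (fun h => ⟨h, dyadicCube_subset_of_mem h hq hr⟩)
    fun h => ⟨h, dyadicCube_subset_of_mem h hr hq⟩

theorem finite_dyadicAncestors (q : ℕ × (ι → ℤ)) : (dyadicAncestors q).Finite := by
  obtain ⟨x, hx⟩ := dyadicCube_nonempty q
  refine ((finite_Iic q.1).image fun k => (k, dyadicIndex k x)).subset ?_
  exact fun r ⟨hr, hqr⟩ => ⟨r.1, hr, Prod.ext rfl (hqr hx)⟩

theorem measurable_dyadicIndex (k : ℕ) : Measurable (dyadicIndex k : (ι → ℝ) → ι → ℤ) := by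
  unfold dyadicIndex
  fun_prop

theorem measurableSet_dyadicCube [Countable ι] (q : ℕ × (ι → ℤ)) :
    MeasurableSet (dyadicCube q) :=
  measurable_dyadicIndex q.1 (measurableSet_singleton q.2)

variable [Fintype ι]

theorem volume_dyadicCube (q : ℕ × (ι → ℤ)) :
    volume (dyadicCube q) = (2⁻¹ ^ q.1) ^ Fintype.card ι := by
  simp [dyadicCube_eq_pi, Real.volume_pi_Ico, ← sub_div, ENNReal.inv_pow]

theorem ediam_dyadicCube_le (q : ℕ × (ι → ℤ)) : Metric.ediam (dyadicCube q) ≤ 2⁻¹ ^ q.1 := by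
  rw [dyadicCube_eq_pi]
  refine Metric.ediam_pi_le_of_le fun i => ?_
  simp [Real.ediam_Ico, ← sub_div, ENNReal.inv_pow]

theorem exists_dyadicCube_subset {ι : Type*} [Finite ι] {U : Set (ι → ℝ)} (hU : IsOpen U)
    {x : ι → ℝ} (hx : x ∈ U) : ∃ k, dyadicCube (k, dyadicIndex k x) ⊆ U := by
  cases nonempty_fintype ι
  obtain ⟨r, hr, hrU⟩ := EMetric.isOpen_iff.1 hU x hx
  obtain ⟨k, hk⟩ := ENNReal.exists_inv_two_pow_lt hr.ne'
  refine ⟨k, fun y hy => hrU ?_⟩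
  exact ((Metric.edist_le_ediam_of_mem hy (mem_dyadicCube_dyadicIndex k x)).trans
    (ediam_dyadicCube_le _)).trans_lt hk

theorem biUnion_dyadicCube_subset_inter_eq {ι : Type*} [Finite ι] {U : Set (ι → ℝ)}
    (hU : IsOpen U) (ν : ι → ℤ) :
    ⋃ q ∈ {q | dyadicCube q ⊆ U ∩ dyadicCube (0, ν)}, dyadicCube q = U ∩ dyadicCube (0, ν) := by
  refine Subset.antisymm (iUnion₂_subset fun _ hq => by simpa using hq) fun x hx => ?_
  obtain ⟨k, hk⟩ := exists_dyadicCube_subset hU hx.1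
  exact mem_biUnion (x := (k, dyadicIndex k x))
    (subset_inter hk (dyadicCube_subset_of_mem k.zero_le hx.2 rfl)) rfl

theorem closedEBall_subset_biUnion_dyadicCube [DecidableEq ι] (k : ℕ) (x : ι → ℝ) :
    Metric.closedEBall x (2⁻¹ ^ k) ⊆
      ⋃ e ∈ Finset.Icc (-1 : ι → ℤ) 1, dyadicCube (k, dyadicIndex k x + e) := by
  intro y hy
  have hyx (i : ι) : |2 ^ k * y i - 2 ^ k * x i| ≤ 1 := by
    have h := (edist_pi_le_iff.1 hy) i
    rw [edist_dist, ← ofReal_inv_two_pow, ENNReal.ofReal_le_ofReal_iff (by positivity),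
      Real.dist_eq] at h
    rw [← mul_sub, abs_mul, abs_of_pos (by positivity), ← le_div_iff₀' (by positivity), one_div]
    exact h
  have hfloor (i : ι) : |dyadicIndex k y i - dyadicIndex k x i| ≤ 1 :=
    abs_floor_sub_floor_le_one (hyx i)
  refine mem_biUnion (x := dyadicIndex k y - dyadicIndex k x) ?_ ?_
  · exact Finset.mem_Icc.2 ⟨fun i => (abs_le.1 (hfloor i)).1, fun i => (abs_le.1 (hfloor i)).2⟩
  · rw [mem_dyadicCube, add_sub_cancel]

end DyadicCube

section DyadicContent

variable {ι : Type*}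

/-- The `s`-dimensional dyadic Hausdorff content: the infimum of `∑ ℓ(Q) ^ s` over covers by
dyadic cubes `Q` of side length `ℓ(Q) ≤ 1`. -/
noncomputable def dyadicContent (s : ℝ) (E : Set (ι → ℝ)) : ℝ≥0∞ :=
  ⨅ (F : Set (ℕ × (ι → ℤ))) (_ : E ⊆ ⋃ q ∈ F, dyadicCube q), ∑' q : F, (2⁻¹ ^ q.1.1) ^ s

theorem dyadicContent_le_tsum (s : ℝ) {E : Set (ι → ℝ)} {F : Set (ℕ × (ι → ℤ))}
    (h : E ⊆ ⋃ q ∈ F, dyadicCube q) : dyadicContent s E ≤ ∑' q : F, (2⁻¹ ^ q.1.1) ^ s :=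
  iInf₂_le F h

theorem dyadicContent_mono (s : ℝ) {E E' : Set (ι → ℝ)} (h : E ⊆ E') :
    dyadicContent s E ≤ dyadicContent s E' :=
  le_iInf₂ fun _ hF => dyadicContent_le_tsum s (h.trans hF)

theorem hausdorffMeasure_eq_zero_of_dyadicContent_eq_zero [Fintype ι] {s : ℝ} (hs : 0 < s)
    {E : Set (ι → ℝ)} (h : dyadicContent s E = 0) : μH[s] E = 0 := by
  have exists_cover (n : ℕ) : ∃ F : Set (ℕ × (ι → ℤ)), E ⊆ ⋃ q ∈ F, dyadicCube q ∧
      ∑' q : F, ((2⁻¹ : ℝ≥0∞) ^ q.1.1) ^ s < (2⁻¹ ^ n) ^ s := by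
    have hpos : dyadicContent s E < (2⁻¹ ^ n) ^ s := by
      rw [h]
      exact ENNReal.rpow_pos (ENNReal.pow_pos (by simp) n) (by finiteness)
    simpa only [dyadicContent, iInf_lt_iff, exists_prop] using hpos
  choose F hEF hF using exists_cover
  have hlim : Tendsto (fun n : ℕ => (2⁻¹ : ℝ≥0∞) ^ n) atTop (𝓝 0) :=
    ENNReal.tendsto_pow_atTop_nhds_zero_of_lt_one (by simp)
  have hlim_rpow : Tendsto (fun n : ℕ => ((2⁻¹ : ℝ≥0∞) ^ n) ^ s) atTop (𝓝 0) := by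
    simpa [hs] using hlim.ennrpow_const s
  have hdiam (n : ℕ) (q : F n) : Metric.ediam (dyadicCube q.1) ≤ 2⁻¹ ^ n :=
    (ediam_dyadicCube_le q.1).trans
      ((ENNReal.rpow_le_rpow_iff hs).1 ((ENNReal.le_tsum q).trans (hF n).le))
  refine nonpos_iff_eq_zero.1 ?_
  calc μH[s] E
      ≤ liminf (fun n => ∑' q : F n, Metric.ediam (dyadicCube q.1) ^ s) atTop :=
        Measure.hausdorffMeasure_le_liminf_tsum s E _ hlim _ (.of_forall hdiam)
          (.of_forall fun n => by simpa only [biUnion_eq_iUnion] using hEF n)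
    _ ≤ liminf (fun n : ℕ => ((2⁻¹ : ℝ≥0∞) ^ n) ^ s) atTop := by
        refine liminf_le_liminf (.of_forall fun n => le_trans ?_ (hF n).le)
        exact ENNReal.tsum_le_tsum fun q => ENNReal.rpow_le_rpow (ediam_dyadicCube_le q.1) hs.le
    _ = 0 := hlim_rpow.liminf_eq

end DyadicContent

section Packing

theorem exists_nat_packing {β : Type*} (A : ℕ → Set β) (hA : ∀ n, (A n).Finite)
    (c : β → ℝ≥0∞) :
    ∃ w : ℕ → ℝ≥0∞, (∀ b, ∑' n, {n | b ∈ A n}.indicator w n ≤ c b) ∧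
      ∀ n, (A n).Nonempty → ∃ b ∈ A n, ∑' n, {n | b ∈ A n}.indicator w n = c b := by
  classical
  -- Greedy choice: `w n` is the largest weight the capacities allow after `w 0, …, w (n - 1)`.
  let slack (load : β → ℝ≥0∞) (n : ℕ) : ℝ≥0∞ := ⨅ b ∈ A n, (c b - load b)
  let load : ℕ → β → ℝ≥0∞ := fun n =>
    Nat.rec 0 (fun n load b => load b + if b ∈ A n then slack load n else 0) n
  let w : ℕ → ℝ≥0∞ := fun n => slack (load n) n
  have load_succ (n : ℕ) (b : β) :
      load (n + 1) b = load n b + {n | b ∈ A n}.indicator w n := rfl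
  have load_eq_sum (n : ℕ) (b : β) :
      load n b = ∑ i ∈ Finset.range n, {n | b ∈ A n}.indicator w i := by
    induction n with
    | zero => rfl
    | succ n ih => rw [load_succ, Finset.sum_range_succ, ih]
  have load_le (n : ℕ) (b : β) : load n b ≤ c b := by
    induction n with
    | zero => exact zero_le
    | succ n ih =>
      rw [load_succ]
      by_cases hb : b ∈ A n
      · rw [indicator_of_mem (s := {n | b ∈ A n}) hb]
        calc load n b + w n ≤ load n b + (c b - load n b) := by gcongr; exact iInf₂_le b hb
          _ = c b := add_tsub_cancel_of_le ih
      · rwa [indicator_of_notMem (s := {n | b ∈ A n}) hb, add_zero]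
  have tsum_le (b : β) : ∑' n, {n | b ∈ A n}.indicator w n ≤ c b := by
    rw [ENNReal.tsum_eq_iSup_nat]
    exact iSup_le fun n => load_eq_sum n b ▸ load_le n b
  refine ⟨w, tsum_le, fun n hn => ?_⟩
  obtain ⟨b, hb, hmin⟩ := (A n).exists_min_image (fun b => c b - load n b) (hA n) hn
  have hwn : w n = c b - load n b := (iInf₂_le b hb).antisymm (le_iInf₂ hmin)
  refine ⟨b, hb, (tsum_le b).antisymm ?_⟩
  calc c b = load (n + 1) b := by
        rw [load_succ, indicator_of_mem (s := {n | b ∈ A n}) hb, hwn,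
          add_tsub_cancel_of_le (load_le n b)]
    _ ≤ ∑' n, {n | b ∈ A n}.indicator w n := load_eq_sum (n + 1) b ▸ ENNReal.sum_le_tsum _

theorem exists_packing {α β : Type*} [Countable α] (A : α → Set β) (hA : ∀ a, (A a).Finite)
    (c : β → ℝ≥0∞) :
    ∃ w : α → ℝ≥0∞, (∀ b, ∑' a, {a | b ∈ A a}.indicator w a ≤ c b) ∧
      ∀ a, (A a).Nonempty → ∃ b ∈ A a, ∑' a, {a | b ∈ A a}.indicator w a = c b := by
  obtain ⟨e, he⟩ := exists_injective_nat α
  let A' : ℕ → Set β := Function.extend e A fun _ => ∅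
  have hA'e (a : α) : A' (e a) = A a := he.extend_apply A _ a
  have hA' (n : ℕ) : (A' n).Finite := by
    by_cases hn : ∃ a, e a = n
    · obtain ⟨a, rfl⟩ := hn
      exact (hA'e a).symm ▸ hA a
    · simp [A', Function.extend_apply' _ _ _ hn]
  obtain ⟨w, hle, heq⟩ := exists_nat_packing A' hA' c
  have htsum (b : β) : ∑' a, {a | b ∈ A a}.indicator (w ∘ e) a =
      ∑' n, {n | b ∈ A' n}.indicator w n := by
    rw [← he.tsum_eq]
    · exact tsum_congr fun a => indicator_eq_indicator (by simp [hA'e]) rfl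
    · intro n hn
      by_contra hne
      exact hn (indicator_of_notMem (by simp [A', Function.extend_apply' _ _ _ hne]) _)
  refine ⟨w ∘ e, fun b => htsum b ▸ hle b, fun a ha => ?_⟩
  obtain ⟨b, hb, hsat⟩ := heq (e a) ((hA'e a).symm ▸ ha)
  exact ⟨b, hA'e a ▸ hb, (htsum b).trans hsat⟩

end Packing

section Frostman

variable {ι : Type*}

/-- The Frostman condition `μ Q ≤ ℓ(Q) ^ s` on the dyadic cubes `Q` of side `ℓ(Q) ≤ 1`. -/
def IsDyadicFrostman (s : ℝ) (μ : Measure (ι → ℝ)) : Prop :=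
  ∀ q, μ (dyadicCube q) ≤ (2⁻¹ ^ q.1) ^ s

theorem IsDyadicFrostman.measure_univ_le_one {s : ℝ} {μ : Measure (ι → ℝ)}
    (hμ : IsDyadicFrostman s μ) {ν : ι → ℤ} (hν : μ (dyadicCube (0, ν))ᶜ = 0) : μ univ ≤ 1 := by
  calc μ univ = μ (dyadicCube (0, ν)) := (measure_of_measure_compl_eq_zero hν).symm
    _ ≤ 1 := by simpa using hμ (0, ν)

variable [Fintype ι]

/-- The measure spreading mass `w q` uniformly over each dyadic cube `q ∈ L`. -/
noncomputable def cubeMixture (L : Set (ℕ × (ι → ℤ))) (w : L → ℝ≥0∞) : Measure (ι → ℝ) :=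
  Measure.sum fun q : L => w q • volume[|dyadicCube q.1]

instance (q : ℕ × (ι → ℤ)) : IsProbabilityMeasure (volume[|dyadicCube q] : Measure (ι → ℝ)) := by
  refine cond_isProbabilityMeasure_of_finite ?_ ?_ <;> simp [volume_dyadicCube]

theorem cond_dyadicCube_mul_le {s : ℝ} (hs : s ≤ Fintype.card ι) {q r : ℕ × (ι → ℤ)}
    (h : q ∈ dyadicAncestors r) :
    volume[dyadicCube r | dyadicCube q] * (2⁻¹ ^ q.1) ^ s ≤ (2⁻¹ ^ r.1) ^ s := by
  set a : ℝ≥0∞ := 2⁻¹ ^ q.1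
  set δ : ℝ≥0∞ := 2⁻¹ ^ (r.1 - q.1)
  have ha : a ≠ 0 := by simp [a]
  have ha' : a ≠ ∞ := by finiteness
  have hr : (2⁻¹ : ℝ≥0∞) ^ r.1 = a * δ := by rw [← pow_add, Nat.add_sub_cancel' h.1]
  have hcond : volume[dyadicCube r | dyadicCube q] = δ ^ (Fintype.card ι : ℝ) := by
    rw [cond_apply (measurableSet_dyadicCube q), inter_eq_self_of_subset_right h.2,
      volume_dyadicCube, volume_dyadicCube, hr, mul_pow, ← mul_assoc,
      ENNReal.inv_mul_cancel (by positivity) (by finiteness), one_mul, ENNReal.rpow_natCast]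
  calc volume[dyadicCube r | dyadicCube q] * a ^ s
      = δ ^ (Fintype.card ι : ℝ) * a ^ s := by rw [hcond]
    _ ≤ δ ^ s * a ^ s := by
        gcongr ?_ * _
        exact ENNReal.rpow_le_rpow_of_exponent_ge (pow_le_one₀ zero_le (by simp)) hs
    _ = (2⁻¹ ^ r.1) ^ s := by
        rw [hr, mul_comm, ENNReal.mul_rpow_of_ne_top ha' (by finiteness)]

theorem cubeMixture_apply (L : Set (ℕ × (ι → ℤ))) (w : L → ℝ≥0∞) {E : Set (ι → ℝ)}
    (hE : MeasurableSet E) :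
    cubeMixture L w E = ∑' q : L, w q * volume[E | dyadicCube q.1] := by
  simp [cubeMixture, Measure.sum_apply _ hE]

theorem cubeMixture_absolutelyContinuous (L : Set (ℕ × (ι → ℤ))) (w : L → ℝ≥0∞) :
    cubeMixture L w ≪ volume :=
  Measure.absolutelyContinuous_sum_left fun _ => cond_absolutelyContinuous.smul_left _

theorem cubeMixture_compl_biUnion (L : Set (ℕ × (ι → ℤ))) (w : L → ℝ≥0∞) :
    cubeMixture L w (⋃ q ∈ L, dyadicCube q)ᶜ = 0 := by
  rw [cubeMixture_apply L w
    (MeasurableSet.biUnion (to_countable L) fun q _ => measurableSet_dyadicCube q).compl]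
  refine ENNReal.tsum_eq_zero.2 fun q => ?_
  rw [cond_apply (measurableSet_dyadicCube _), disjoint_compl_right_iff_subset.2
    (subset_biUnion_of_mem q.2) |>.inter_eq]
  simp

theorem tsum_indicator_le_cubeMixture (L : Set (ℕ × (ι → ℤ))) (w : L → ℝ≥0∞) (r : ℕ × (ι → ℤ)) :
    ∑' q, {q : L | r ∈ dyadicAncestors q.1}.indicator w q ≤ cubeMixture L w (dyadicCube r) := by
  rw [cubeMixture_apply L w (measurableSet_dyadicCube r)]
  refine ENNReal.tsum_le_tsum fun q => indicator_apply_le' (fun hq => ?_) fun _ => zero_le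
  refine le_mul_of_one_le_right' ?_
  rw [cond_apply (measurableSet_dyadicCube q.1), inter_eq_self_of_subset_left hq.2,
    ENNReal.inv_mul_cancel (by simp [volume_dyadicCube]) (by simp [volume_dyadicCube])]

theorem isDyadicFrostman_cubeMixture {s : ℝ} (hs : s ≤ Fintype.card ι) {L : Set (ℕ × (ι → ℤ))}
    (hL : L.PairwiseDisjoint dyadicCube) {w : L → ℝ≥0∞}
    (hw : ∀ r, ∑' q, {q : L | r ∈ dyadicAncestors q.1}.indicator w q ≤ (2⁻¹ ^ r.1) ^ s) :
    IsDyadicFrostman s (cubeMixture L w) := by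
  intro r
  rw [cubeMixture_apply L w (measurableSet_dyadicCube r)]
  have cond_eq_zero {q} (h : Disjoint (dyadicCube q) (dyadicCube r)) :
      (volume : Measure (ι → ℝ))[dyadicCube r | dyadicCube q] = 0 := by
    rw [cond_apply (measurableSet_dyadicCube q), h.inter_eq, measure_empty, mul_zero]
  by_cases hr : ∃ q : L, q.1 ∈ dyadicAncestors r
  · obtain ⟨q₀, hq₀⟩ := hr
    have hw₀ : w q₀ ≤ (2⁻¹ ^ q₀.1.1) ^ s := by
      refine le_trans ?_ ((ENNReal.le_tsum q₀).trans (hw q₀))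
      exact (indicator_of_mem (s := {q : L | q₀.1 ∈ dyadicAncestors q.1})
        (self_mem_dyadicAncestors q₀.1) w).ge
    rw [tsum_eq_single q₀ fun q hq => by
      rw [cond_eq_zero ((hL q.2 q₀.2 (Subtype.coe_injective.ne hq)).mono_right hq₀.2), mul_zero]]
    calc w q₀ * volume[dyadicCube r | dyadicCube q₀.1]
        ≤ (2⁻¹ ^ q₀.1.1) ^ s * volume[dyadicCube r | dyadicCube q₀.1] := by gcongr
      _ ≤ (2⁻¹ ^ r.1) ^ s := by
        rw [mul_comm]
        exact cond_dyadicCube_mul_le hs hq₀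
  · refine (ENNReal.tsum_le_tsum fun q => ?_).trans (hw r)
    rcases disjoint_or_mem_dyadicAncestors q.1 r with h | h | h
    · simp [cond_eq_zero h]
    · exact absurd ⟨q, h⟩ hr
    · rw [indicator_of_mem (s := {q : L | r ∈ dyadicAncestors q.1}) h]
      exact mul_le_of_le_one_right' prob_le_one

theorem exists_isDyadicFrostman {s : ℝ} (hs : s ≤ Fintype.card ι) (S : Set (ℕ × (ι → ℤ))) :
    ∃ μ : Measure (ι → ℝ), μ ≪ volume ∧ μ (⋃ q ∈ S, dyadicCube q)ᶜ = 0 ∧ IsDyadicFrostman s μ ∧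
      dyadicContent s (⋃ q ∈ S, dyadicCube q) ≤ μ univ := by
  obtain ⟨L, -, hL, hLS⟩ := exists_pairwiseDisjoint_dyadicCube S
  obtain ⟨w, hw, hsat⟩ := exists_packing (fun q : L => dyadicAncestors q.1)
    (fun q => finite_dyadicAncestors q.1) fun r => (2⁻¹ ^ r.1) ^ s
  choose r hr hrw using fun q : L => hsat q ⟨q.1, self_mem_dyadicAncestors q.1⟩
  obtain ⟨F, hFr, hF, hFU⟩ := exists_pairwiseDisjoint_dyadicCube (range r)
  rw [← hLS]
  refine ⟨cubeMixture L w, cubeMixture_absolutelyContinuous L w, cubeMixture_compl_biUnion L w,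
    isDyadicFrostman_cubeMixture hs hL hw, ?_⟩
  have hcover : ⋃ q ∈ L, dyadicCube q ⊆ ⋃ q ∈ F, dyadicCube q := by
    rw [hFU, biUnion_range]
    exact iUnion₂_subset fun q hq => (hr ⟨q, hq⟩).2.trans (subset_iUnion (dyadicCube ∘ r) ⟨q, hq⟩)
  calc dyadicContent s (⋃ q ∈ L, dyadicCube q)
      ≤ ∑' q : F, (2⁻¹ ^ q.1.1) ^ s := dyadicContent_le_tsum s hcover
    _ ≤ ∑' q : F, cubeMixture L w (dyadicCube q.1) := by
        refine ENNReal.tsum_le_tsum fun q => ?_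
        obtain ⟨p, hp⟩ := hFr q.2
        exact hp ▸ (hrw p).ge.trans (tsum_indicator_le_cubeMixture L w _)
    _ = cubeMixture L w (⋃ q ∈ F, dyadicCube q) :=
        (measure_biUnion (to_countable F) hF fun q _ => measurableSet_dyadicCube q).symm
    _ ≤ cubeMixture L w univ := measure_mono (subset_univ _)

end Frostman

section Potential

theorem rpow_neg_le_one_add_tsum {t : ℝ} (ht : 0 < t) (d : ℝ≥0∞) :
    d ^ (-t) ≤ 1 + ∑' k : ℕ, if d ≤ 2⁻¹ ^ k then (2 ^ (k + 1)) ^ t else 0 := by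
  rcases lt_or_ge 1 d with hd | hd
  · exact (ENNReal.rpow_le_one_of_one_le_of_neg hd.le (neg_lt_zero.2 ht)).trans le_self_add
  refine le_trans ?_ le_add_self
  rcases eq_or_ne d 0 with rfl | hd₀
  · calc (0 : ℝ≥0∞) ^ (-t) ≤ ∑' _ : ℕ, 1 := by
          rw [ENNReal.tsum_const_eq_top_of_ne_zero one_ne_zero]
          exact le_top
      _ ≤ ∑' k : ℕ, if (0 : ℝ≥0∞) ≤ 2⁻¹ ^ k then (2 ^ (k + 1)) ^ t else 0 := by
          refine ENNReal.tsum_le_tsum fun k => ?_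
          rw [if_pos zero_le]
          exact ENNReal.one_le_rpow (one_le_pow₀ one_le_two) ht
  have hex : ∃ k : ℕ, (2⁻¹ : ℝ≥0∞) ^ k < d := ENNReal.exists_inv_two_pow_lt hd₀
  obtain ⟨k, hk, hmin⟩ := Nat.findX hex
  obtain ⟨k, rfl⟩ : ∃ j, k = j + 1 := Nat.exists_eq_succ_of_ne_zero fun h => by
    rw [h, pow_zero] at hk
    exact hk.not_ge hd
  have hdk : d ≤ 2⁻¹ ^ k := not_lt.1 (hmin k k.lt_succ_self)
  refine le_trans ?_ (ENNReal.le_tsum k)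
  rw [if_pos hdk, ENNReal.rpow_neg, ← ENNReal.inv_rpow]
  refine ENNReal.rpow_le_rpow (ENNReal.inv_le_iff_inv_le.1 ?_) ht.le
  rw [ENNReal.inv_pow]
  exact hk.le

theorem tsum_two_pow_rpow_mul_ne_top {s t : ℝ} (hts : t < s) :
    ∑' k : ℕ, ((2 : ℝ≥0∞) ^ (k + 1)) ^ t * (2⁻¹ ^ k) ^ s ≠ ∞ := by
  have hterm (k : ℕ) : ((2 : ℝ≥0∞) ^ (k + 1)) ^ t * (2⁻¹ ^ k) ^ s = 2 ^ t * (2 ^ (t - s)) ^ k := by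
    simp only [ENNReal.inv_rpow, ← ENNReal.rpow_neg, ← ENNReal.rpow_natCast,
      ← ENNReal.rpow_mul, ← ENNReal.rpow_add _ _ two_ne_zero ENNReal.ofNat_ne_top]
    congr 1
    push_cast
    ring
  simp only [hterm, ENNReal.tsum_mul_left, ENNReal.tsum_geometric]
  have hlt : (2 : ℝ≥0∞) ^ (t - s) < 1 :=
    ENNReal.rpow_lt_one_of_one_lt_of_neg ENNReal.one_lt_two (sub_neg.2 hts)
  exact ENNReal.mul_ne_top (by finiteness) (ENNReal.inv_ne_top.2 (tsub_pos_iff_lt.2 hlt).ne')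

variable {ι : Type*} [Fintype ι]

theorem IsDyadicFrostman.measure_closedEBall_le {s : ℝ} {μ : Measure (ι → ℝ)}
    (hμ : IsDyadicFrostman s μ) (k : ℕ) (x : ι → ℝ) :
    μ (Metric.closedEBall x (2⁻¹ ^ k)) ≤ 3 ^ Fintype.card ι * (2⁻¹ ^ k) ^ s := by
  classical
  calc μ (Metric.closedEBall x (2⁻¹ ^ k))
      ≤ ∑ e ∈ Finset.Icc (-1 : ι → ℤ) 1, μ (dyadicCube (k, dyadicIndex k x + e)) :=
        (measure_mono (closedEBall_subset_biUnion_dyadicCube k x)).trans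
          (measure_biUnion_finset_le _ _)
    _ ≤ ∑ _e ∈ Finset.Icc (-1 : ι → ℤ) 1, (2⁻¹ ^ k) ^ s := Finset.sum_le_sum fun _ _ => hμ _
    _ = 3 ^ Fintype.card ι * (2⁻¹ ^ k) ^ s := by simp [Pi.card_Icc, Int.card_Icc]

theorem exists_forall_lintegral_edist_rpow_neg_le (ι : Type*) [Fintype ι] {s t : ℝ} (ht : 0 < t)
    (hts : t < s) :
    ∃ C : ℝ≥0∞, C ≠ ∞ ∧ ∀ μ : Measure (ι → ℝ), IsDyadicFrostman s μ →
      ∀ x, ∫⁻ y, edist x y ^ (-t) ∂μ ≤ μ univ + C := by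
  refine ⟨3 ^ Fintype.card ι * ∑' k : ℕ, (2 ^ (k + 1)) ^ t * (2⁻¹ ^ k) ^ s,
    ENNReal.mul_ne_top (by finiteness) (tsum_two_pow_rpow_mul_ne_top hts), fun μ hμ x => ?_⟩
  have hint (k : ℕ) : ∫⁻ y, (if edist x y ≤ 2⁻¹ ^ k then (2 ^ (k + 1)) ^ t else 0) ∂μ =
      (2 ^ (k + 1)) ^ t * μ (Metric.closedEBall x (2⁻¹ ^ k)) := by
    rw [← setLIntegral_const, ← lintegral_indicator Metric.isClosed_closedEBall.measurableSet]
    simp only [indicator, Metric.mem_closedEBall']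
  calc ∫⁻ y, edist x y ^ (-t) ∂μ
      ≤ ∫⁻ y, 1 + ∑' k : ℕ, (if edist x y ≤ 2⁻¹ ^ k then (2 ^ (k + 1)) ^ t else 0) ∂μ :=
        lintegral_mono fun _ => rpow_neg_le_one_add_tsum ht _
    _ = μ univ + ∑' k : ℕ, (2 ^ (k + 1)) ^ t * μ (Metric.closedEBall x (2⁻¹ ^ k)) := by
        have hmeas (k : ℕ) : Measurable fun y : ι → ℝ =>
            if edist x y ≤ 2⁻¹ ^ k then ((2 : ℝ≥0∞) ^ (k + 1)) ^ t else 0 :=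
          .ite (measurableSet_le (by fun_prop) measurable_const) measurable_const measurable_const
        rw [lintegral_add_left measurable_const, lintegral_one,
          lintegral_tsum fun k => (hmeas k).aemeasurable]
        simp only [hint]
    _ ≤ μ univ + ∑' k : ℕ, (2 ^ (k + 1)) ^ t * (3 ^ Fintype.card ι * (2⁻¹ ^ k) ^ s) := by
        gcongr with k
        exact hμ.measure_closedEBall_le k x
    _ = _ := by simp only [← ENNReal.tsum_mul_left, mul_left_comm]

end Potential

section Projection

/-- The signed position along the line of direction `(cos θ, sin θ)` of the orthogonal projection of
`z` onto that line. -/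
noncomputable def proj (θ : ℝ) (z : Fin 2 → ℝ) : ℝ := z 0 * Real.cos θ + z 1 * Real.sin θ

/-- The point with coordinates `p` in the orthonormal frame with first axis `(cos θ, sin θ)`. -/
noncomputable def rotate (θ : ℝ) (p : ℝ × ℝ) : Fin 2 → ℝ :=
  ![p.1 * Real.cos θ - p.2 * Real.sin θ, p.1 * Real.sin θ + p.2 * Real.cos θ]

theorem proj_rotate (θ : ℝ) (p : ℝ × ℝ) : proj θ (rotate θ p) = p.1 := by
  simp only [proj, rotate, Matrix.cons_val_zero, Matrix.cons_val_one]
  linear_combination p.1 * Real.cos_sq_add_sin_sq θ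

theorem rotate_proj (θ : ℝ) (z : Fin 2 → ℝ) :
    rotate θ (proj θ z, z 1 * Real.cos θ - z 0 * Real.sin θ) = z := by
  ext i
  fin_cases i
  · simp only [proj, rotate, Fin.zero_eta, Matrix.cons_val_zero]
    linear_combination z 0 * Real.cos_sq_add_sin_sq θ
  · simp only [proj, rotate, Fin.mk_one, Matrix.cons_val_one, Matrix.cons_val_fin_one]
    linear_combination z 1 * Real.cos_sq_add_sin_sq θ

theorem rotate_add (θ : ℝ) (p q : ℝ × ℝ) : rotate θ (p + q) = rotate θ p + rotate θ q := by
  ext i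
  fin_cases i <;> simp [rotate] <;> ring

@[fun_prop]
theorem continuous_proj {X : Type*} [TopologicalSpace X] {a : X → ℝ} {z : X → Fin 2 → ℝ}
    (ha : Continuous a) (hz : Continuous z) : Continuous fun x => proj (a x) (z x) := by
  unfold proj
  fun_prop

@[fun_prop]
theorem measurable_proj {X : Type*} [MeasurableSpace X] {a : X → ℝ} {z : X → Fin 2 → ℝ}
    (ha : Measurable a) (hz : Measurable z) : Measurable fun x => proj (a x) (z x) := by
  unfold proj
  fun_prop

@[fun_prop]
theorem measurable_rotate {X : Type*} [MeasurableSpace X] {a : X → ℝ} {p : X → ℝ × ℝ}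
    (ha : Measurable a) (hp : Measurable p) : Measurable fun x => rotate (a x) (p x) := by
  refine measurable_pi_iff.2 (Fin.forall_fin_two.2 ⟨?_, ?_⟩) <;>
    simp only [rotate, Matrix.cons_val_zero, Matrix.cons_val_one] <;> fun_prop

theorem measurePreserving_rotate (θ : ℝ) : MeasurePreserving (rotate θ) := by
  let M : Matrix (Fin 2) (Fin 2) ℝ := !![Real.cos θ, -Real.sin θ; Real.sin θ, Real.cos θ]
  have hdet : M.det = 1 := by
    simp only [M, Matrix.det_fin_two_of]
    linear_combination Real.cos_sq_add_sin_sq θ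
  have hM : MeasurePreserving (Matrix.toLin' M) := by
    refine ⟨(Matrix.toLin' M).continuous_of_finiteDimensional.measurable, ?_⟩
    rw [Real.map_matrix_volume_pi_eq_smul_volume_pi (by simp [hdet]), hdet]
    simp
  have hrotate : rotate θ = Matrix.toLin' M ∘ (MeasurableEquiv.finTwoArrow (α := ℝ)).symm := by
    ext p i
    fin_cases i <;> simp [rotate, M, sub_eq_add_neg]
  rw [hrotate]
  exact hM.comp (volume_preserving_finTwoArrow ℝ).symm

end Projection

section Radon

/-- The Radon transform: the integral of `f` over the line `{z | proj θ z = t}`. -/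
noncomputable def radon (f : (Fin 2 → ℝ) → ℝ≥0∞) (θ t : ℝ) : ℝ≥0∞ := ∫⁻ u, f (rotate θ (t, u))

variable {f : (Fin 2 → ℝ) → ℝ≥0∞}

@[fun_prop]
theorem measurable_radon {X : Type*} [MeasurableSpace X] (hf : Measurable f) {a t : X → ℝ}
    (ha : Measurable a) (ht : Measurable t) : Measurable fun x => radon f (a x) (t x) := by
  have h : Measurable fun q : X × ℝ => f (rotate (a q.1) (t q.1, q.2)) := by fun_prop
  exact h.lintegral_prod_right'

theorem lintegral_mul_radon (hf : Measurable f) (θ : ℝ) {g : ℝ → ℝ≥0∞} (hg : Measurable g) :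
    ∫⁻ t, g t * radon f θ t = ∫⁻ z, g (proj θ z) * f z := by
  have hgf : Measurable fun z => g (proj θ z) * f z := by fun_prop
  rw [← (measurePreserving_rotate θ).lintegral_comp hgf, Measure.volume_eq_prod,
    lintegral_prod _ (by fun_prop)]
  simp only [proj_rotate]
  refine lintegral_congr fun t => ?_
  rw [radon, lintegral_const_mul _ (by fun_prop)]

theorem radon_proj (f : (Fin 2 → ℝ) → ℝ≥0∞) (θ : ℝ) (z : Fin 2 → ℝ) :
    radon f θ (proj θ z) = ∫⁻ w, f (z + rotate θ (0, w)) := by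
  have h (w : ℝ) : z + rotate θ (0, w) =
      rotate θ (proj θ z, z 1 * Real.cos θ - z 0 * Real.sin θ + w) := by
    conv_lhs => rw [← rotate_proj θ z, ← rotate_add, Prod.mk_add_mk, add_zero]
  simp only [h]
  exact (lintegral_add_left_eq_self (fun u => f (rotate θ (proj θ z, u))) _).symm

theorem lintegral_polar_le {g : ℝ × ℝ → ℝ≥0∞} (hg : Measurable g) :
    ∫⁻ θ in Ioo (-π) π, ∫⁻ r in Ioi (0 : ℝ), g (r * Real.cos θ, r * Real.sin θ) ≤
      ∫⁻ p, g p * ‖p‖ₑ⁻¹ := by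
  have one_le (r θ : ℝ) (hr : 0 < r) :
      1 ≤ ENNReal.ofReal r * ‖(r * Real.cos θ, r * Real.sin θ)‖ₑ⁻¹ := by
    have hnorm : ‖(r * Real.cos θ, r * Real.sin θ)‖ₑ ≤ ENNReal.ofReal r := by
      rw [← ofReal_norm]
      refine ENNReal.ofReal_le_ofReal (norm_prod_le_iff.2 ⟨?_, ?_⟩) <;>
        rw [norm_mul, Real.norm_of_nonneg hr.le]
      exacts [mul_le_of_le_one_right hr.le (Real.abs_cos_le_one θ),
        mul_le_of_le_one_right hr.le (Real.abs_sin_le_one θ)]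
    rw [← div_eq_mul_inv]
    exact (ENNReal.le_div_iff_mul_le (.inr (by simpa using hr)) (.inr (by simp))).2
      (by rwa [one_mul])
  rw [← lintegral_comp_polarCoord_symm, polarCoord_target, Measure.volume_eq_prod,
    ← Measure.prod_restrict, lintegral_prod_symm _ (by fun_prop)]
  refine lintegral_mono fun θ => setLIntegral_mono' measurableSet_Ioi fun r hr => ?_
  rw [polarCoord_symm_apply, smul_eq_mul, mul_left_comm]
  exact le_mul_of_one_le_right' (one_le r θ hr)

theorem lintegral_eq_setLIntegral_Ioi_add_neg (g : ℝ → ℝ≥0∞) :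
    ∫⁻ w, g w = (∫⁻ w in Ioi (0 : ℝ), g w) + ∫⁻ w in Ioi (0 : ℝ), g (-w) := by
  have hneg : ∫⁻ w in Ioi (0 : ℝ), g (-w) = ∫⁻ w in Iio (0 : ℝ), g w := by
    have h := (Measure.measurePreserving_neg (volume : Measure ℝ)).setLIntegral_comp_preimage_emb
      (MeasurableEquiv.neg ℝ).measurableEmbedding g (Iio 0)
    simpa using h
  rw [hneg, setLIntegral_congr Iio_ae_eq_Iic, ← compl_Ioi, lintegral_add_compl g measurableSet_Ioi]

theorem lintegral_lintegral_rotate_le (hf : Measurable f) :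
    ∫⁻ θ in Ioo (-π) π, ∫⁻ w, f (rotate θ (0, w)) ≤ 2 * ∫⁻ z, f z * ‖z‖ₑ⁻¹ := by
  have rotate_half (θ w : ℝ) :
      rotate θ (0, w) = rotate (π / 2) (w * Real.cos θ, w * Real.sin θ) := by simp [rotate]
  have rotate_neg_half (θ w : ℝ) :
      rotate θ (0, -w) = rotate (-(π / 2)) (w * Real.cos θ, w * Real.sin θ) := by simp [rotate]
  have enorm_half (p : ℝ × ℝ) : ‖rotate (π / 2) p‖ₑ = ‖p‖ₑ := by
    simp [rotate, enorm, Pi.nnnorm_def, Prod.nnnorm_def, Fin.univ_succ, max_comm]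
  have enorm_neg_half (p : ℝ × ℝ) : ‖rotate (-(π / 2)) p‖ₑ = ‖p‖ₑ := by
    simp [rotate, enorm, Pi.nnnorm_def, Prod.nnnorm_def, Fin.univ_succ, max_comm]
  have polar (α : ℝ) (hα : ∀ p, ‖rotate α p‖ₑ = ‖p‖ₑ) :
      ∫⁻ θ in Ioo (-π) π, ∫⁻ w in Ioi (0 : ℝ), f (rotate α (w * Real.cos θ, w * Real.sin θ)) ≤
        ∫⁻ z, f z * ‖z‖ₑ⁻¹ := by
    rw [← (measurePreserving_rotate α).lintegral_comp (by fun_prop)]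
    simp only [hα]
    exact lintegral_polar_le (hf.comp (measurePreserving_rotate α).measurable)
  simp only [lintegral_eq_setLIntegral_Ioi_add_neg]
  rw [lintegral_add_left (by fun_prop), two_mul]
  refine add_le_add ?_ ?_
  · simpa only [rotate_half] using polar _ enorm_half
  · simpa only [rotate_neg_half] using polar _ enorm_neg_half

theorem lintegral_sq_radon_le (hf : Measurable f) :
    ∫⁻ θ in Ioo (-π) π, ∫⁻ t, radon f θ t ^ 2 ≤
      2 * ∫⁻ z, f z * ∫⁻ y, f y * (edist z y)⁻¹ := by
  calc ∫⁻ θ in Ioo (-π) π, ∫⁻ t, radon f θ t ^ 2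
      = ∫⁻ θ in Ioo (-π) π, ∫⁻ z, radon f θ (proj θ z) * f z := by
        simp only [sq]
        exact lintegral_congr fun θ => lintegral_mul_radon hf θ (by fun_prop)
    _ = ∫⁻ z, f z * ∫⁻ θ in Ioo (-π) π, ∫⁻ w, f (z + rotate θ (0, w)) := by
        rw [lintegral_lintegral_swap (by fun_prop)]
        simp only [radon_proj]
        refine lintegral_congr fun z => ?_
        rw [lintegral_mul_const _ (by fun_prop), mul_comm]
    _ ≤ ∫⁻ z, f z * (2 * ∫⁻ y, f (z + y) * ‖y‖ₑ⁻¹) := by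
        gcongr with z
        exact lintegral_lintegral_rotate_le (hf.comp (measurable_const_add z))
    _ = 2 * ∫⁻ z, f z * ∫⁻ y, f y * (edist z y)⁻¹ := by
        simp only [mul_left_comm _ (2 : ℝ≥0∞)]
        rw [lintegral_const_mul' _ _ ENNReal.ofNat_ne_top]
        congr 1
        refine lintegral_congr fun z => ?_
        rw [← lintegral_add_left_eq_self (fun y => f y * (edist z y)⁻¹) z]
        simp [edist_eq_enorm_sub]

theorem sq_lintegral_mul_le {α : Type*} [MeasurableSpace α] (μ : Measure α) {f g : α → ℝ≥0∞}
    (hf : AEMeasurable f μ) (hg : AEMeasurable g μ) :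
    (∫⁻ x, f x * g x ∂μ) ^ 2 ≤ (∫⁻ x, f x ^ 2 ∂μ) * ∫⁻ x, g x ^ 2 ∂μ := by
  have h := ENNReal.lintegral_mul_le_Lp_mul_Lq μ .two_two hf hg
  have key := pow_le_pow_left' h 2
  simp only [mul_pow, Pi.mul_apply, ENNReal.rpow_ofNat, ← ENNReal.rpow_mul_natCast] at key
  simpa using key

theorem sq_lintegral_mul_volume_proj_le (hf : Measurable f) {G : Set (ℝ × ℝ)}
    (hG : MeasurableSet G) :
    (∫⁻ z, f z * volume.restrict (Ioo (-π) π) {θ | (θ, proj θ z) ∈ G}) ^ 2 ≤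
      volume G * (2 * ∫⁻ z, f z * ∫⁻ y, f y * (edist z y)⁻¹) := by
  have : Measurable (G.indicator 1 : ℝ × ℝ → ℝ≥0∞) := measurable_one.indicator hG
  have hangle (z : Fin 2 → ℝ) : volume.restrict (Ioo (-π) π) {θ | (θ, proj θ z) ∈ G} =
      ∫⁻ θ in Ioo (-π) π, G.indicator 1 (θ, proj θ z) :=
    (lintegral_indicator_one (hG.preimage (by fun_prop : Measurable fun θ => (θ, proj θ z)))).symm
  let σ : Measure (ℝ × ℝ) := (volume.restrict (Ioo (-π) π)).prod volume
  calc (∫⁻ z, f z * volume.restrict (Ioo (-π) π) {θ | (θ, proj θ z) ∈ G}) ^ 2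
      = (∫⁻ θ in Ioo (-π) π, ∫⁻ z, G.indicator 1 (θ, proj θ z) * f z) ^ 2 := by
        rw [lintegral_lintegral_swap (by fun_prop)]
        congr 1
        refine lintegral_congr fun z => ?_
        rw [hangle, lintegral_mul_const _ (by fun_prop), mul_comm]
    _ = (∫⁻ p, G.indicator 1 p * radon f p.1 p.2 ∂σ) ^ 2 := by
        rw [lintegral_prod _ (by fun_prop)]
        congr 1
        exact lintegral_congr fun θ => (lintegral_mul_radon hf θ
          (g := fun t => G.indicator 1 (θ, t)) (by fun_prop)).symm
    _ ≤ (∫⁻ p, G.indicator 1 p ^ 2 ∂σ) * ∫⁻ p, radon f p.1 p.2 ^ 2 ∂σ :=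
        sq_lintegral_mul_le σ (by fun_prop) (by fun_prop)
    _ ≤ volume G * (2 * ∫⁻ z, f z * ∫⁻ y, f y * (edist z y)⁻¹) := by
        have hσ : σ ≤ volume := Measure.prod_mono Measure.restrict_le_self le_rfl
        gcongr
        · calc ∫⁻ p, G.indicator 1 p ^ 2 ∂σ = σ G := by
                rw [← lintegral_indicator_one hG]
                refine lintegral_congr fun p => ?_
                by_cases hp : p ∈ G <;> simp [hp]
            _ ≤ volume G := hσ G
        · rw [lintegral_prod _ (by fun_prop)]
          exact lintegral_sq_radon_le hf

theorem sq_lintegral_volume_proj_le (μ : Measure (Fin 2 → ℝ)) [SigmaFinite μ] (hμ : μ ≪ volume)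
    {G : Set (ℝ × ℝ)} (hG : MeasurableSet G) :
    (∫⁻ z, volume.restrict (Ioo (-π) π) {θ | (θ, proj θ z) ∈ G} ∂μ) ^ 2 ≤
      volume G * (2 * ∫⁻ z, ∫⁻ y, (edist z y)⁻¹ ∂μ ∂μ) := by
  have h := sq_lintegral_mul_volume_proj_le (Measure.measurable_rnDeriv μ volume) hG
  have hangle : Measurable fun z => volume.restrict (Ioo (-π) π) {θ | (θ, proj θ z) ∈ G} :=
    measurable_measure_prodMk_right (hG.preimage
      (by fun_prop : Measurable fun q : ℝ × (Fin 2 → ℝ) => (q.1, proj q.1 q.2)))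
  have hpot : Measurable fun z : Fin 2 → ℝ => ∫⁻ y, (edist z y)⁻¹ ∂μ :=
    Measurable.lintegral_prod_right' (f := fun p => (edist p.1 p.2)⁻¹) (by fun_prop)
  have hinner (z : Fin 2 → ℝ) :
      ∫⁻ y, μ.rnDeriv volume y * (edist z y)⁻¹ = ∫⁻ y, (edist z y)⁻¹ ∂μ :=
    lintegral_rnDeriv_mul hμ (by fun_prop)
  simpa only [hinner, lintegral_rnDeriv_mul hμ hangle.aemeasurable,
    lintegral_rnDeriv_mul hμ hpot.aemeasurable] using h

end Radon

section NullProjections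

theorem isOpen_setOf_lt_measure_section {X Y : Type*} [TopologicalSpace X] [MeasurableSpace X]
    [TopologicalSpace Y] (μ : Measure X) [μ.Regular] {V : Set (X × Y)} (hV : IsOpen V) (δ : ℝ≥0∞) :
    IsOpen {y | δ < μ {x | (x, y) ∈ V}} := by
  refine isOpen_iff_mem_nhds.2 fun y hy => ?_
  have hVy : IsOpen {x | (x, y) ∈ V} := hV.preimage (Continuous.prodMk_left y)
  obtain ⟨C, hCV, hC, hδC⟩ := hVy.exists_lt_isCompact hy
  have hsub : C ×ˢ {y} ⊆ V := by
    rintro ⟨x, _⟩ ⟨hx, rfl⟩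
    exact hCV hx
  obtain ⟨u, v, -, hv, hCu, hyv, huv⟩ := generalized_tube_lemma hC isCompact_singleton hV hsub
  filter_upwards [hv.mem_nhds (hyv rfl)] with w hw
  exact hδC.trans_le (measure_mono fun x hx => huv ⟨hCu hx, hw⟩)

theorem exists_isOpen_of_measure_section_eq_zero {X Y : Type*} [TopologicalSpace X]
    [TopologicalSpace Y] [MeasurableSpace X] [MeasurableSpace Y] {μ : Measure X} {ν : Measure Y}
    [SFinite ν] [(μ.prod ν).OuterRegular] {A : Set (X × Y)} (hA : NullMeasurableSet A (μ.prod ν))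
    {ε : ℝ≥0∞} (hε : 0 < ε) :
    ∃ G : Set (X × Y), IsOpen G ∧ μ.prod ν G < ε ∧
      ∀ᵐ x ∂μ, ν (Prod.mk x ⁻¹' A) = 0 → Prod.mk x ⁻¹' A ⊆ Prod.mk x ⁻¹' G := by
  let T := toMeasurable (μ.prod ν) A
  let Θ : Set X := {x | ν (Prod.mk x ⁻¹' T) = 0}
  have hT : MeasurableSet T := measurableSet_toMeasurable _ _
  have hΘ : MeasurableSet Θ := measurable_measure_prodMk_left hT (measurableSet_singleton 0)
  have hnull : μ.prod ν (T ∩ Θ ×ˢ univ) = 0 := by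
    rw [Measure.measure_prod_null (hT.inter (hΘ.prod .univ))]
    refine .of_forall fun x => ?_
    by_cases hx : x ∈ Θ
    · exact measure_mono_null (fun y hy => hy.1) hx
    · simp [hx]
  obtain ⟨G, hG, hGo, hGε⟩ := Set.exists_isOpen_lt_of_lt _ ε (hnull.trans_lt hε)
  refine ⟨G, hGo, hGε, ?_⟩
  filter_upwards [Measure.ae_ae_of_ae_prod hA.toMeasurable_ae_eq] with x hx h0 y hy
  have hxΘ : x ∈ Θ := (measure_congr hx).trans h0
  exact hG ⟨subset_toMeasurable _ _ hy, hxΘ, mem_univ y⟩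

theorem ae_of_periodic_of_ae_restrict_Ioo {T : ℝ} (hT : 0 < T) (a : ℝ) {p : ℝ → Prop}
    (hp : Function.Periodic p T) (h : ∀ᵐ x ∂volume.restrict (Ioo a (a + T)), p x) :
    ∀ᵐ x, p x := by
  refine (isAddFundamentalDomain_Ioc hT a).measure_zero_of_invariant _ ?_ ?_
  · intro g
    ext x
    rw [mem_vadd_set_iff_neg_vadd_mem, mem_compl_iff, mem_compl_iff]
    exact not_congr (hp.map_vadd_zmultiples (-g) x).to_iff
  · rw [Measure.restrict_congr_set Ioo_ae_eq_Ioc] at h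
    exact (Measure.restrict_apply' measurableSet_Ioc).symm.trans h

/-- Let `μ` be a Frostman measure of mass `M` on the set in question. Then `δ * M` is at most the
`μ`-integral of the angular measure, whose square is at most `volume G` times the energy of `μ`, and
the latter is linear in `M`. -/
theorem exists_forall_sq_mul_dyadicContent_le {s : ℝ} (hs : 1 < s) (hs2 : s ≤ 2) :
    ∃ C : ℝ≥0∞, C ≠ ∞ ∧ ∀ G : Set (ℝ × ℝ), IsOpen G → ∀ (δ : ℝ≥0∞) (ν : Fin 2 → ℤ),
      δ ^ 2 * dyadicContent s ({z | δ < volume.restrict (Ioo (-π) π) {θ | (θ, proj θ z) ∈ G}} ∩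
        dyadicCube (0, ν)) ≤ C * volume G := by
  obtain ⟨C, hC, henergy⟩ := exists_forall_lintegral_edist_rpow_neg_le (Fin 2) one_pos hs
  refine ⟨2 * (1 + C), by finiteness, fun G hG δ ν => ?_⟩
  let angle (z : Fin 2 → ℝ) : ℝ≥0∞ := volume.restrict (Ioo (-π) π) {θ | (θ, proj θ z) ∈ G}
  let U : Set (Fin 2 → ℝ) := {z | δ < angle z}
  have hU : IsOpen U := isOpen_setOf_lt_measure_section (volume.restrict (Ioo (-π) π))
    (V := (fun q => (q.1, proj q.1 q.2)) ⁻¹' G) (hG.preimage (by fun_prop)) δ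
  obtain ⟨μ, hμ, hμU, hfrost, hcontent⟩ := exists_isDyadicFrostman (by simpa using hs2)
    {q : ℕ × (Fin 2 → ℤ) | dyadicCube q ⊆ U ∩ dyadicCube (0, ν)}
  rw [biUnion_dyadicCube_subset_inter_eq hU] at hμU hcontent
  have hmass : μ univ ≤ 1 := hfrost.measure_univ_le_one
    (measure_mono_null (compl_subset_compl.2 inter_subset_right) hμU)
  have : IsFiniteMeasure μ := ⟨hmass.trans_lt ENNReal.one_lt_top⟩
  have hlower : δ * μ univ ≤ ∫⁻ z, angle z ∂μ := by
    rw [← lintegral_const]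
    refine lintegral_mono_ae ?_
    filter_upwards [mem_ae_iff.2 hμU] with z hz using hz.1.le
  have hupper : ∫⁻ z, ∫⁻ y, (edist z y)⁻¹ ∂μ ∂μ ≤ (1 + C) * μ univ := by
    rw [← lintegral_const]
    gcongr with z
    simpa only [ENNReal.rpow_neg_one] using (henergy μ hfrost z).trans (by gcongr)
  have hsq : δ ^ 2 * μ univ * μ univ ≤ 2 * (1 + C) * volume G * μ univ := by
    calc δ ^ 2 * μ univ * μ univ = (δ * μ univ) ^ 2 := by ring
      _ ≤ volume G * (2 * ((1 + C) * μ univ)) :=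
        (pow_le_pow_left' hlower 2).trans
          ((sq_lintegral_volume_proj_le μ hμ hG.measurableSet).trans (by gcongr))
      _ = 2 * (1 + C) * volume G * μ univ := by ring
  refine (mul_le_mul_right hcontent _).trans ?_
  rcases eq_or_ne (μ univ) 0 with h0 | h0
  · simp [h0]
  · exact (ENNReal.mul_le_mul_iff_left h0 (measure_ne_top μ univ)).1 hsq

theorem nullMeasurableSet_graph_proj {K : Set (Fin 2 → ℝ)} (hK : AnalyticSet K) :
    NullMeasurableSet {p : ℝ × ℝ | p.2 ∈ proj p.1 '' K} := by
  have himage : {p : ℝ × ℝ | p.2 ∈ proj p.1 '' K} =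
      (fun q : ℝ × (Fin 2 → ℝ) => (q.1, proj q.1 q.2)) '' (Prod.snd ⁻¹' K) := by
    ext ⟨θ, t⟩
    simp
  rw [himage]
  exact nullMeasurableSet_of_analyticSet _
    ((hK.preimage continuous_snd).image_of_continuous (by fun_prop))

theorem dyadicContent_inter_dyadicCube_eq_zero {s : ℝ} (hs : 1 < s) (hs2 : s ≤ 2)
    {K : Set (Fin 2 → ℝ)} (hK : AnalyticSet K)
    (hproj : volume.restrict (Ioo (-π) π) {θ | volume (proj θ '' K) = 0} ≠ 0) (ν : Fin 2 → ℤ) :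
    dyadicContent s (K ∩ dyadicCube (0, ν)) = 0 := by
  obtain ⟨C, hC, hcontent⟩ := exists_forall_sq_mul_dyadicContent_le hs hs2
  obtain ⟨δ, hδ, hδlt⟩ := exists_between (pos_iff_ne_zero.2 hproj)
  suffices h : ∀ ε : ℝ≥0∞, 0 < ε → δ ^ 2 * dyadicContent s (K ∩ dyadicCube (0, ν)) ≤ C * ε by
    have hlim : Tendsto (fun ε => C * ε) (𝓝[>] 0) (𝓝 0) := by
      have h0 : Tendsto (fun ε => C * ε) (𝓝 0) (𝓝 (C * 0)) :=
        ENNReal.Tendsto.const_mul tendsto_id (.inr hC)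
      simpa using h0.mono_left nhdsWithin_le_nhds
    have hzero := ge_of_tendsto hlim (eventually_mem_nhdsWithin.mono h)
    simpa [hδ.ne'] using hzero
  intro ε hε
  obtain ⟨G, hG, hGε, hsub⟩ :=
    exists_isOpen_of_measure_section_eq_zero (nullMeasurableSet_graph_proj hK) hε
  have hKU : K ⊆ {z | δ < volume.restrict (Ioo (-π) π) {θ | (θ, proj θ z) ∈ G}} := by
    refine fun z hz => hδlt.trans_le (measure_mono_ae ?_)
    filter_upwards [ae_restrict_of_ae hsub] with θ hθ h0
    exact hθ h0 (mem_image_of_mem _ hz)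
  calc δ ^ 2 * dyadicContent s (K ∩ dyadicCube (0, ν))
      ≤ C * volume G := (mul_le_mul_right (dyadicContent_mono s
        (inter_subset_inter_left _ hKU)) _).trans (hcontent G hG δ ν)
    _ ≤ C * ε := by gcongr; exact hGε.le

theorem hausdorffMeasure_eq_zero_of_volume_proj_eq_zero {s : ℝ} (hs : 1 < s) (hs2 : s ≤ 2)
    {K : Set (Fin 2 → ℝ)} (hK : AnalyticSet K)
    (hproj : volume.restrict (Ioo (-π) π) {θ | volume (proj θ '' K) = 0} ≠ 0) : μH[s] K = 0 := by
  refine measure_mono_null (t := ⋃ ν, K ∩ dyadicCube (0, ν)) (fun z hz => ?_)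
    (measure_iUnion_null fun ν => hausdorffMeasure_eq_zero_of_dyadicContent_eq_zero
      (one_pos.trans hs) (dyadicContent_inter_dyadicCube_eq_zero hs hs2 hK hproj ν))
  exact mem_iUnion.2 ⟨dyadicIndex 0 z, hz, mem_dyadicCube_dyadicIndex 0 z⟩

theorem periodic_proj : Function.Periodic proj (2 * π) := fun θ => by
  ext z
  simp [proj]

theorem ae_volume_proj_pos {K : Set (Fin 2 → ℝ)} (hK : AnalyticSet K) (hdim : 1 < dimH K) :
    ∀ᵐ θ, 0 < volume (proj θ '' K) := by
  obtain ⟨s, hs, hsK⟩ := ENNReal.lt_iff_exists_nnreal_btwn.1 (lt_min hdim ENNReal.one_lt_two)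
  have hs1 : (1 : ℝ) < s := mod_cast hs
  have hs2 : (s : ℝ) ≤ 2 := mod_cast (hsK.trans_le (min_le_right _ _)).le
  refine ae_of_periodic_of_ae_restrict_Ioo Real.two_pi_pos (-π)
    (periodic_proj.comp fun f => 0 < volume (f '' K)) ?_
  rw [show -π + 2 * π = π by ring]
  by_contra hproj
  simp only [ae_iff, not_lt, nonpos_iff_eq_zero] at hproj
  have hzero := hausdorffMeasure_eq_zero_of_volume_proj_eq_zero hs1 hs2 hK hproj
  simp [hausdorffMeasure_of_lt_dimH (hsK.trans_le (min_le_left _ _))] at hzero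

end NullProjections

end Marstrand

theorem stmt_5_general (K : Set (EuclideanSpace ℝ (Fin 2))) (hK : AnalyticSet K)
    (hdim : 1 < dimH K) :
    ∀ᵐ θ ∂(volume : Measure ℝ),
      0 < volume ((fun x : EuclideanSpace ℝ (Fin 2) =>
        x 0 * Real.cos θ + x 1 * Real.sin θ) '' K) := by
  let e := EuclideanSpace.equiv (Fin 2) ℝ
  have h := Marstrand.ae_volume_proj_pos (hK.image_of_continuous e.continuous)
    (by rwa [e.dimH_image])
  simp only [Set.image_image] at h
  exact h

/-- Marstrand: If K ⊂ ℝ² is a Borel set with Hausdorff dimension > 1,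
then for Lebesgue-almost every θ ∈ ℝ, the orthogonal projection of K onto the line L_θ
through the origin in direction v_θ = (cos θ, sin θ) has positive one-dimensional
Lebesgue measure. The line L_θ is identified isometrically with ℝ via t ↦ t • v_θ, so
that the orthogonal projection proj_θ becomes x ↦ ⟪x, v_θ⟫ = x₀ cos θ + x₁ sin θ and
arclength measure on L_θ becomes Lebesgue measure on ℝ. -/
theorem stmt_5 (K : Set (EuclideanSpace ℝ (Fin 2))) (hK : MeasurableSet K)
    (hdim : 1 < dimH K) :
    ∀ᵐ θ ∂(volume : Measure ℝ),
      0 < volume ((fun x : EuclideanSpace ℝ (Fin 2) =>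
        x 0 * Real.cos θ + x 1 * Real.sin θ) '' K) :=
  stmt_5_general K hK.analyticSet hdim
end

section
/- Let K ⊂ ℝ² be a Borel set with Hausdorff dimension d > 1 and m_d(K) < ∞. For θ ∈ ℝ let μ_θ = (proj_θ)_*(m_d ↾ K) be the pushforward onto the line L_θ of the restriction of m_d to K. Then for Lebesgue-almost every θ, the measure μ_θ is absolutely continuous with respect to the one-dimensional Lebesgue measure m on L_θ. -/
open MeasureTheory

/-!
Let `μ ≪ μH[d]` be finite with `d > 1`. By the Vitali covering theorem the upper `d`-density of `μ`
is finite `μH[d]`-a.e., hence `μ`-a.e., and at such points the potential `∫ |x - y|⁻¹ dμ(y)`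
converges because `d > 1`. For fixed `w` the angles `θ` with `|proj_θ w| ≤ r` fill only
`O(r / |w|)` of the circle, so Fatou and Tonelli bound the average over `θ` of the lower density of
`μ_θ` at `proj_θ x` by the potential of `μ` at `x`. Thus for a.e. `θ` the lower density of `μ_θ` is
finite `μ_θ`-a.e., and Besicovitch's differentiation theorem gives `μ_θ ≪ volume`.
-/

open Filter Metric Set Topology
open scoped ENNReal NNReal

section Density

variable {X : Type*} [MetricSpace X] [MeasurableSpace X]

/-- The upper `d`-dimensional density of `μ` at `x`, normalised by `r ^ d`. -/
noncomputable def upperDensity (d : ℝ) (μ : Measure X) (x : X) : ℝ≥0∞ :=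
  limsup (fun r : ℝ => μ (closedBall x r) / ENNReal.ofReal r ^ d) (𝓝[>] 0)

/-- The Riesz potential `∫ |x - y| ^ (-s) dμ(y)` of order `s` of `μ` at `x`. The integrand is
`ℝ≥0∞`-valued, so for `0 < s` it is `∞` at `y = x` and an atom at `x` makes the potential
infinite. -/
noncomputable def rieszPotential (s : ℝ) (μ : Measure X) (x : X) : ℝ≥0∞ :=
  ∫⁻ y, edist x y ^ (-s) ∂μ

/-- The lower density at `x` of `ν` with respect to `ρ`, computed along the balls of radii `r n`.
A sequence of radii is used so that Fatou's lemma applies and measurability is immediate. -/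
noncomputable def lowerDensityAlong (r : ℕ → ℝ) (ν ρ : Measure X) (x : X) : ℝ≥0∞ :=
  liminf (fun n => ν (closedBall x (r n)) / ρ (closedBall x (r n))) atTop

lemma exists_nnreal_forall_eventually_measure_closedBall_le {d : ℝ} {μ : Measure X} {x : X}
    (h : upperDensity d μ x < ∞) :
    ∃ C : ℝ≥0, ∀ᶠ r : ℝ in 𝓝[>] 0, μ (closedBall x r) ≤ C * ENNReal.ofReal r ^ d := by
  obtain ⟨C, hC, -⟩ := ENNReal.lt_iff_exists_nnreal_btwn.1 h
  refine ⟨C, ?_⟩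
  filter_upwards [eventually_lt_of_limsup_lt hC, self_mem_nhdsWithin] with r hr hr0
  have hr0 : ENNReal.ofReal r ≠ 0 := (ENNReal.ofReal_pos.2 hr0).ne'
  exact (ENNReal.div_le_iff (by simp [hr0]) (by simp [hr0])).1 hr.le

lemma measure_singleton_eq_zero_of_upperDensity_lt_top {d : ℝ} (hd : 0 < d) {μ : Measure X}
    {x : X} (h : upperDensity d μ x < ∞) : μ {x} = 0 := by
  obtain ⟨C, hC⟩ := exists_nnreal_forall_eventually_measure_closedBall_le h
  have hlim : Tendsto (fun r : ℝ => C * ENNReal.ofReal r ^ d) (𝓝[>] 0) (𝓝 0) := by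
    have : Continuous fun r : ℝ => (C : ℝ≥0∞) * ENNReal.ofReal r ^ d :=
      (ENNReal.continuous_const_mul ENNReal.coe_ne_top).comp
        (ENNReal.continuous_rpow_const.comp ENNReal.continuous_ofReal)
    simpa [hd] using (this.tendsto 0).mono_left nhdsWithin_le_nhds
  refine le_antisymm (ge_of_tendsto hlim ?_) zero_le
  filter_upwards [hC, self_mem_nhdsWithin] with r hr hr0
  exact (measure_mono (singleton_subset_iff.2 (mem_closedBall_self (le_of_lt hr0)))).trans hr

lemma lintegral_ofReal_lt_top_of_eventually_meas_le {α : Type*} [MeasurableSpace α]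
    {μ : Measure α} [IsFiniteMeasure μ] {f : α → ℝ} (hf : AEMeasurable f μ) (hf0 : 0 ≤ᵐ[μ] f)
    {p : ℝ} (hp : 1 < p) {C : ℝ≥0}
    (h : ∀ᶠ t : ℝ in atTop, μ {a | t ≤ f a} ≤ C * ENNReal.ofReal (t ^ (-p))) :
    ∫⁻ a, ENNReal.ofReal (f a) ∂μ < ∞ := by
  obtain ⟨T, hT⟩ := eventually_atTop.1 (h.and (eventually_gt_atTop 0))
  have hT0 : 0 < T := (hT T le_rfl).2
  rw [lintegral_eq_lintegral_meas_le μ hf0 hf, ← Ioc_union_Ioi_eq_Ioi hT0.le]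
  refine (lintegral_union_le _ _ _).trans_lt (ENNReal.add_lt_top.2 ⟨?_, ?_⟩)
  · calc ∫⁻ t in Ioc 0 T, μ {a | t ≤ f a} ≤ ∫⁻ _ in Ioc 0 T, μ univ :=
          lintegral_mono fun t => measure_mono (subset_univ _)
      _ = μ univ * volume (Ioc 0 T) := setLIntegral_const _ _
      _ < ∞ := ENNReal.mul_lt_top (measure_lt_top _ _) (by simp)
  · calc ∫⁻ t in Ioi T, μ {a | t ≤ f a} ≤ ∫⁻ t in Ioi T, C * ENNReal.ofReal (t ^ (-p)) :=
          setLIntegral_mono' measurableSet_Ioi fun t ht => (hT t (le_of_lt ht)).1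
      _ = C * ∫⁻ t in Ioi T, ENNReal.ofReal (t ^ (-p)) :=
          lintegral_const_mul' _ _ ENNReal.coe_ne_top
      _ < ∞ := ENNReal.mul_lt_top ENNReal.coe_lt_top
          (integrableOn_Ioi_rpow_of_lt (by linarith) hT0).lintegral_lt_top

lemma rieszPotential_lt_top_of_upperDensity_lt_top [OpensMeasurableSpace X] {s d : ℝ}
    (hs : 0 < s) (hsd : s < d) {μ : Measure X} [IsFiniteMeasure μ] {x : X}
    (h : upperDensity d μ x < ∞) : rieszPotential s μ x < ∞ := by
  obtain ⟨C, hC⟩ := exists_nnreal_forall_eventually_measure_closedBall_le h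
  have hne : ∀ᵐ y ∂μ, y ≠ x := by
    simpa [ae_iff] using measure_singleton_eq_zero_of_upperDensity_lt_top (hs.trans hsd) h
  have hreal : rieszPotential s μ x = ∫⁻ y, ENNReal.ofReal (dist x y ^ (-s)) ∂μ := by
    refine lintegral_congr_ae (hne.mono fun y hy => ?_)
    beta_reduce
    rw [edist_dist, ENNReal.ofReal_rpow_of_pos (dist_pos.2 hy.symm)]
  rw [hreal]
  refine lintegral_ofReal_lt_top_of_eventually_meas_le (p := d / s) (C := C) (by fun_prop)
    (ae_of_all _ fun y => by positivity) ((one_lt_div hs).2 hsd) ?_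
  have hradius : Tendsto (fun t : ℝ => t ^ (-s⁻¹)) atTop (𝓝[>] 0) :=
    tendsto_nhdsWithin_iff.2 ⟨tendsto_rpow_neg_atTop (inv_pos.2 hs),
      (eventually_gt_atTop 0).mono fun t ht => Real.rpow_pos_of_pos ht _⟩
  filter_upwards [hradius.eventually hC, eventually_gt_atTop 0] with t ht ht0
  have hsuperlevel : ∀ᵐ y ∂μ, t ≤ dist x y ^ (-s) → y ∈ closedBall x (t ^ (-s⁻¹)) := by
    filter_upwards [hne] with y hy hty
    rw [mem_closedBall']
    rwa [← inv_neg, Real.le_rpow_inv_iff_of_neg (dist_pos.2 hy.symm) ht0 (neg_neg_of_pos hs)]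
  calc μ {y | t ≤ dist x y ^ (-s)} ≤ μ (closedBall x (t ^ (-s⁻¹))) := measure_mono_ae hsuperlevel
    _ ≤ C * ENNReal.ofReal (t ^ (-s⁻¹)) ^ d := ht
    _ = C * ENNReal.ofReal (t ^ (-(d / s))) := by
        rw [ENNReal.ofReal_rpow_of_pos (by positivity), ← Real.rpow_mul ht0.le]
        ring_nf

section Hausdorff

variable [BorelSpace X] [SecondCountableTopology X]

lemma exists_countable_cover_closedBall_mul_tsum_le {d δ : ℝ} {c : ℝ≥0∞} {μ : Measure X}
    {A : Set X}
    (hA : ∀ x ∈ A, ∃ r ∈ Ioo 0 δ, c * ENNReal.ofReal r ^ d ≤ μ (closedBall x r)) :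
    ∃ (u : Set X) (r : X → ℝ), u.Countable ∧ (∀ x ∈ u, r x ∈ Ioo 0 δ) ∧
      A ⊆ ⋃ x : u, closedBall (x : X) (4 * r x) ∧
      c * ∑' x : u, ENNReal.ofReal (r x) ^ d ≤ μ univ := by
  choose! r hr hrμ using hA
  obtain ⟨u, huA, hdisj, hcover⟩ :=
    Vitali.exists_disjoint_subfamily_covering_enlargement_closedBall A id r δ
      (fun x hx => (hr x hx).2.le) 4 (by norm_num)
  have hu : u.Countable := hdisj.countable_of_nonempty_interior fun x hx =>
    (nonempty_ball.2 (hr x (huA hx)).1).mono ball_subset_interior_closedBall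
  have : Countable u := hu.to_subtype
  refine ⟨u, r, hu, fun x hx => hr x (huA hx), fun x hx => ?_, ?_⟩
  · obtain ⟨y, hy, hsub⟩ := hcover x hx
    exact mem_iUnion.2 ⟨⟨y, hy⟩, hsub (mem_closedBall_self (hr x hx).1.le)⟩
  · calc c * ∑' x : u, ENNReal.ofReal (r x) ^ d
        = ∑' x : u, c * ENNReal.ofReal (r x) ^ d := ENNReal.tsum_mul_left.symm
      _ ≤ ∑' x : u, μ (closedBall (x : X) (r x)) :=
          ENNReal.tsum_le_tsum fun x => hrμ x (huA x.2)
      _ = μ (⋃ x : u, closedBall (x : X) (r x)) :=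
          (measure_iUnion (hdisj.subtype _ _) fun x => isClosed_closedBall.measurableSet).symm
      _ ≤ μ univ := measure_mono (subset_univ _)

-- The Vitali enlargement factor is `4`, and a ball of radius `4 * r` has diameter at most `8 * r`.
lemma mul_hausdorffMeasure_le_of_forall_frequently {d : ℝ} (hd : 0 ≤ d) (c : ℝ≥0)
    {μ : Measure X} {A : Set X}
    (hA : ∀ x ∈ A, ∃ᶠ r : ℝ in 𝓝[>] 0, c * ENNReal.ofReal r ^ d ≤ μ (closedBall x r)) :
    c * μH[d] A ≤ 8 ^ d * μ univ := by
  rcases eq_or_ne c 0 with rfl | hc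
  · simp
  have hsmall (n : ℕ) : ∀ x ∈ A, ∃ r ∈ Ioo (0 : ℝ) (1 / (n + 1)),
      c * ENNReal.ofReal r ^ d ≤ μ (closedBall x r) := fun x hx =>
    ((hA x hx).and_eventually (Ioo_mem_nhdsGT Nat.one_div_pos_of_nat)).exists.imp
      fun _ => And.symm
  choose u r hu hr hcover hsum using
    fun n => exists_countable_cover_closedBall_mul_tsum_le (hsmall n)
  have (n : ℕ) : Countable (u n) := (hu n).to_subtype
  have hdiam (n : ℕ) (x : u n) :
      ediam (closedBall (x : X) (4 * r n x)) ≤ 8 * ENNReal.ofReal (r n x) := by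
    rw [← closedEBall_ofReal (by linarith [(hr n x x.2).1])]
    refine ediam_closedEBall_le.trans_eq ?_
    rw [ENNReal.ofReal_mul (by norm_num), ← mul_assoc]
    norm_num
  have hmesh : Tendsto (fun n : ℕ => 8 * ENNReal.ofReal (1 / (n + 1))) atTop (𝓝 0) := by
    simpa using ENNReal.Tendsto.const_mul
      (ENNReal.tendsto_ofReal tendsto_one_div_add_atTop_nhds_zero_nat)
      (.inr (ENNReal.ofNat_ne_top (n := 8)))
  have hsum_diam (n : ℕ) :
      c * ∑' x : u n, ediam (closedBall (x : X) (4 * r n x)) ^ d ≤ 8 ^ d * μ univ :=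
    calc c * ∑' x : u n, ediam (closedBall (x : X) (4 * r n x)) ^ d
        ≤ c * ∑' x : u n, 8 ^ d * ENNReal.ofReal (r n x) ^ d := by
          gcongr with x
          rw [← ENNReal.mul_rpow_of_nonneg _ _ hd]
          gcongr
          exact hdiam n x
      _ = 8 ^ d * (c * ∑' x : u n, ENNReal.ofReal (r n x) ^ d) := by
          rw [ENNReal.tsum_mul_left, mul_left_comm]
      _ ≤ 8 ^ d * μ univ := by gcongr; exact hsum n
  simp only [mul_comm (c : ℝ≥0∞), ← ENNReal.le_div_iff_mul_le (.inl (ENNReal.coe_ne_zero.2 hc))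
    (.inl ENNReal.coe_ne_top)] at hsum_diam ⊢
  exact (Measure.hausdorffMeasure_le_liminf_tsum d A _ hmesh
    (fun n (x : u n) => closedBall (x : X) (4 * r n x))
    (.of_forall fun n x => (hdiam n x).trans (by gcongr; exact (hr n x x.2).2.le))
    (.of_forall hcover)).trans (liminf_le_of_frequently_le' (.of_forall hsum_diam))

lemma mul_hausdorffMeasure_setOf_lt_upperDensity_le {d : ℝ} (hd : 0 ≤ d) (c : ℝ≥0)
    (μ : Measure X) : c * μH[d] {x | c < upperDensity d μ x} ≤ 8 ^ d * μ univ := by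
  refine mul_hausdorffMeasure_le_of_forall_frequently hd c fun x hx => ?_
  have hfreq : ∃ᶠ r : ℝ in 𝓝[>] 0, c < μ (closedBall x r) / ENNReal.ofReal r ^ d :=
    frequently_lt_of_lt_limsup (by isBoundedDefault) hx
  exact hfreq.mono fun r hr => ENNReal.mul_le_of_le_div hr.le

lemma ae_hausdorffMeasure_upperDensity_lt_top {d : ℝ} (hd : 0 ≤ d) (μ : Measure X)
    [IsFiniteMeasure μ] : ∀ᵐ x ∂μH[d], upperDensity d μ x < ∞ := by
  have hbound : 8 ^ d * μ univ ≠ ∞ := by finiteness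
  simp only [ae_iff, not_lt_top_iff]
  by_contra hpos
  obtain ⟨n, hn⟩ := ENNReal.exists_nat_mul_gt hpos hbound
  refine hn.not_ge (le_trans ?_ (mul_hausdorffMeasure_setOf_lt_upperDensity_le hd n μ))
  gcongr with x
  · simp
  · rintro hx
    simp [hx]

end Hausdorff

section Differentiation

variable [SecondCountableTopology X]

lemma measurable_measure_closedBall [OpensMeasurableSpace X] (ν : Measure X) [SFinite ν] (r : ℝ) :
    Measurable fun x => ν (closedBall x r) :=
  measurable_measure_prodMk_left (s := {p : X × X | dist p.2 p.1 ≤ r})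
    (isClosed_le (by fun_prop) (by fun_prop)).measurableSet

lemma measurable_lowerDensityAlong [OpensMeasurableSpace X] (r : ℕ → ℝ) (ν ρ : Measure X)
    [SFinite ν] [SFinite ρ] : Measurable (lowerDensityAlong r ν ρ) :=
  .liminf fun n =>
    (measurable_measure_closedBall ν (r n)).div (measurable_measure_closedBall ρ (r n))

lemma absolutelyContinuous_of_ae_lowerDensityAlong_lt_top [BorelSpace X]
    [HasBesicovitchCovering X] {ν ρ : Measure X} [SFinite ν] [IsLocallyFiniteMeasure ρ]
    {r : ℕ → ℝ} (hr : Tendsto r atTop (𝓝[>] 0))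
    (h : ∀ᵐ x ∂ν, lowerDensityAlong r ν ρ x < ∞) : ν ≪ ρ := by
  intro s hs
  have hlevel (n : ℕ) : ν (s ∩ {x | lowerDensityAlong r ν ρ x < (n + 1 : ℝ≥0)}) = 0 := by
    refine le_antisymm ?_ zero_le
    calc ν (s ∩ {x | lowerDensityAlong r ν ρ x < (n + 1 : ℝ≥0)})
        ≤ ((n + 1 : ℝ≥0) • ρ) (s ∩ {x | lowerDensityAlong r ν ρ x < (n + 1 : ℝ≥0)}) := by
          refine (Besicovitch.vitaliFamily ν).measure_le_of_frequently_le _ .rfl _ fun x hx => ?_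
          have hfreq : ∃ᶠ k in atTop,
              ν (closedBall x (r k)) / ρ (closedBall x (r k)) < (n + 1 : ℝ≥0) :=
            frequently_lt_of_liminf_lt (by isBoundedDefault) hx.2
          refine ((Besicovitch.tendsto_filterAt ν x).comp hr).frequently (hfreq.mono fun k hk => ?_)
          exact (ENNReal.div_le_iff_le_mul (by simp) (by simp)).1 hk.le
      _ ≤ ((n + 1 : ℝ≥0) • ρ) s := measure_mono inter_subset_left
      _ = 0 := by simp [hs]
  refine measure_mono_null_ae ?_ (measure_iUnion_null hlevel)
  filter_upwards [h] with x hx hxs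
  obtain ⟨n, hn⟩ := ENNReal.exists_nat_gt hx.ne
  exact mem_iUnion.2 ⟨n, hxs, hn.trans (by exact_mod_cast n.lt_succ_self)⟩

end Differentiation

end Density

section Projection

local notation "ℝ²" => EuclideanSpace ℝ (Fin 2)

/-- Orthogonal projection of the plane onto the line `L_θ` in direction `(cos θ, sin θ)`, where
`L_θ` is identified with `ℝ` through its unit vector. -/
noncomputable def planarProj (θ : ℝ) (x : ℝ²) : ℝ :=
  x 0 * Real.cos θ + x 1 * Real.sin θ

lemma planarProj_sub (θ : ℝ) (x y : ℝ²) :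
    planarProj θ (x - y) = planarProj θ x - planarProj θ y := by
  simp only [planarProj, PiLp.sub_apply]
  ring

@[fun_prop]
lemma continuous_planarProj {Z : Type*} [TopologicalSpace Z] {θ : Z → ℝ} {x : Z → ℝ²}
    (hθ : Continuous θ) (hx : Continuous x) : Continuous fun z => planarProj (θ z) (x z) := by
  unfold planarProj
  fun_prop

lemma sin_sub_smul_eq_planarProj_smul_sub (θ φ : ℝ) (w : ℝ²) :
    Real.sin (θ - φ) • w = planarProj φ w • !₂[Real.sin θ, -Real.cos θ] -
      planarProj θ w • !₂[Real.sin φ, -Real.cos φ] := by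
  ext i
  fin_cases i <;> simp [planarProj, Real.sin_sub] <;> ring

lemma abs_sin_sub_mul_norm_le (θ φ : ℝ) (w : ℝ²) :
    |Real.sin (θ - φ)| * ‖w‖ ≤ |planarProj φ w| + |planarProj θ w| := by
  have hunit (α : ℝ) : ‖!₂[Real.sin α, -Real.cos α]‖ = 1 := by
    simp [EuclideanSpace.norm_eq]
  simpa [← sin_sub_smul_eq_planarProj_smul_sub, norm_smul, hunit] using
    norm_sub_le (planarProj φ w • !₂[Real.sin θ, -Real.cos θ])
      (planarProj θ w • !₂[Real.sin φ, -Real.cos φ])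

lemma volume_inter_setOf_abs_planarProj_le {I : Set ℝ}
    (hI : ∀ θ ∈ I, ∀ φ ∈ I, |θ - φ| ≤ Real.pi / 2) {ε : ℝ} (hε : 0 < ε) (w : ℝ²) :
    volume ({θ | |planarProj θ w| ≤ ε} ∩ I) ≤ ENNReal.ofReal (Real.pi * ε) * ‖w‖ₑ⁻¹ := by
  rcases eq_or_ne w 0 with rfl | hw
  · simp [ENNReal.mul_top, Real.pi_pos, hε]
  have hw0 : 0 < ‖w‖ := norm_pos_iff.2 hw
  rw [← ofReal_norm, ← ENNReal.ofReal_inv_of_pos hw0, ← ENNReal.ofReal_mul (by positivity)]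
  refine (Real.volume_le_diam _).trans (ediam_le ?_)
  rintro θ ⟨hθ, hθI⟩ φ ⟨hφ, hφI⟩
  rw [edist_dist, Real.dist_eq, ← div_eq_mul_inv]
  refine ENNReal.ofReal_le_ofReal ((le_div_iff₀ hw0).2 ?_)
  have hjordan : |θ - φ| ≤ Real.pi / 2 * |Real.sin (θ - φ)| := by
    have := Real.mul_abs_le_abs_sin (hI θ hθI φ hφI)
    rwa [← inv_div, inv_mul_le_iff₀ (by positivity)] at this
  calc |θ - φ| * ‖w‖ ≤ Real.pi / 2 * |Real.sin (θ - φ)| * ‖w‖ := by gcongr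
    _ = Real.pi / 2 * (|Real.sin (θ - φ)| * ‖w‖) := mul_assoc _ _ _
    _ ≤ Real.pi / 2 * (ε + ε) := by
        gcongr
        exact (abs_sin_sub_mul_norm_le θ φ w).trans (add_le_add hφ hθ)
    _ = Real.pi * ε := by ring

variable {μ : Measure ℝ²}

lemma map_planarProj_closedBall (μ : Measure ℝ²) (θ r : ℝ) (x : ℝ²) :
    μ.map (planarProj θ) (closedBall (planarProj θ x) r) = μ {y | |planarProj θ (x - y)| ≤ r} := by
  rw [Measure.map_apply (by fun_prop) measurableSet_closedBall]
  simp only [preimage, mem_closedBall', Real.dist_eq, planarProj_sub]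

lemma measurable_map_planarProj_closedBall (μ : Measure ℝ²) [SFinite μ] (r : ℝ) :
    Measurable fun p : ℝ² × ℝ => μ.map (planarProj p.2) (closedBall (planarProj p.2 p.1) r) := by
  simp only [map_planarProj_closedBall]
  have hclosed : IsClosed {q : (ℝ² × ℝ) × ℝ² | |planarProj q.1.2 (q.1.1 - q.2)| ≤ r} :=
    isClosed_le (by fun_prop) (by fun_prop)
  exact measurable_measure_prodMk_left hclosed.measurableSet

lemma measurable_lowerDensityAlong_map_planarProj (r : ℕ → ℝ) (μ : Measure ℝ²) [SFinite μ] :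
    Measurable fun p : ℝ² × ℝ =>
      lowerDensityAlong r (μ.map (planarProj p.2)) volume (planarProj p.2 p.1) := by
  unfold lowerDensityAlong
  simp only [Real.volume_closedBall]
  exact .liminf fun n => (measurable_map_planarProj_closedBall μ (r n)).div_const _

lemma setLIntegral_map_planarProj_closedBall_le [SFinite μ] {I : Set ℝ}
    (hI : ∀ θ ∈ I, ∀ φ ∈ I, |θ - φ| ≤ Real.pi / 2) {r : ℝ} (hr : 0 < r) (x : ℝ²) :
    ∫⁻ θ in I, μ.map (planarProj θ) (closedBall (planarProj θ x) r) ≤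
      ENNReal.ofReal (Real.pi * r) * rieszPotential 1 μ x := by
  have hmeas : MeasurableSet {p : ℝ × ℝ² | |planarProj p.1 (x - p.2)| ≤ r} :=
    (isClosed_le (by fun_prop) (by fun_prop)).measurableSet
  calc ∫⁻ θ in I, μ.map (planarProj θ) (closedBall (planarProj θ x) r)
      = ∫⁻ θ in I, μ {y | |planarProj θ (x - y)| ≤ r} := by simp only [map_planarProj_closedBall]
    _ = ∫⁻ y, volume.restrict I {θ | |planarProj θ (x - y)| ≤ r} ∂μ :=
        (Measure.prod_apply hmeas).symm.trans (Measure.prod_apply_symm hmeas)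
    _ ≤ ∫⁻ y, ENNReal.ofReal (Real.pi * r) * edist x y ^ (-1 : ℝ) ∂μ := by
        refine lintegral_mono fun y => ?_
        have hslice : MeasurableSet {θ | |planarProj θ (x - y)| ≤ r} :=
          measurable_prodMk_right hmeas
        rw [Measure.restrict_apply hslice, ENNReal.rpow_neg_one, edist_eq_enorm_sub]
        exact volume_inter_setOf_abs_planarProj_le hI hr (x - y)
    _ = ENNReal.ofReal (Real.pi * r) * rieszPotential 1 μ x :=
        lintegral_const_mul' _ _ ENNReal.ofReal_ne_top

lemma setLIntegral_lowerDensityAlong_map_planarProj_le [SFinite μ] {I : Set ℝ}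
    (hI : ∀ θ ∈ I, ∀ φ ∈ I, |θ - φ| ≤ Real.pi / 2) {r : ℕ → ℝ} (hr : ∀ n, 0 < r n) (x : ℝ²) :
    ∫⁻ θ in I, lowerDensityAlong r (μ.map (planarProj θ)) volume (planarProj θ x) ≤
      ENNReal.ofReal (Real.pi / 2) * rieszPotential 1 μ x := by
  have hpair : Measurable fun θ : ℝ => (x, θ) := by fun_prop
  have hmeas (n : ℕ) :
      Measurable fun θ => μ.map (planarProj θ) (closedBall (planarProj θ x) (r n)) :=
    ((measurable_map_planarProj_closedBall μ (r n)).comp hpair :)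
  simp only [lowerDensityAlong, Real.volume_closedBall]
  refine (lintegral_liminf_le fun n => (hmeas n).div_const _).trans
    (liminf_le_of_frequently_le' (.of_forall fun n => ?_))
  calc ∫⁻ θ in I, μ.map (planarProj θ) (closedBall (planarProj θ x) (r n)) /
          ENNReal.ofReal (2 * r n)
      = (∫⁻ θ in I, μ.map (planarProj θ) (closedBall (planarProj θ x) (r n))) /
          ENNReal.ofReal (2 * r n) := by
        simp only [div_eq_mul_inv]
        exact lintegral_mul_const _ (hmeas n)
    _ ≤ ENNReal.ofReal (Real.pi * r n) * rieszPotential 1 μ x / ENNReal.ofReal (2 * r n) := by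
        gcongr
        exact setLIntegral_map_planarProj_closedBall_le hI (hr n) x
    _ = ENNReal.ofReal (Real.pi / 2) * rieszPotential 1 μ x := by
        have := hr n
        rw [mul_comm, mul_div_assoc, ← ENNReal.ofReal_div_of_pos (by positivity),
          mul_div_mul_right _ _ this.ne', mul_comm]

lemma ae_restrict_map_planarProj_absolutelyContinuous [SFinite μ] {I : Set ℝ}
    (hI : ∀ θ ∈ I, ∀ φ ∈ I, |θ - φ| ≤ Real.pi / 2) (hμ : ∀ᵐ x ∂μ, rieszPotential 1 μ x < ∞) :
    ∀ᵐ θ ∂volume.restrict I, μ.map (planarProj θ) ≪ volume := by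
  obtain ⟨r, -, hr, hrlim⟩ := exists_seq_strictAnti_tendsto (0 : ℝ)
  have hr_gt : Tendsto r atTop (𝓝[>] 0) := tendsto_nhdsWithin_iff.2 ⟨hrlim, .of_forall hr⟩
  have hmeas := measurable_lowerDensityAlong_map_planarProj r μ
  have hfinite : ∀ᵐ x ∂μ, ∀ᵐ θ ∂volume.restrict I,
      lowerDensityAlong r (μ.map (planarProj θ)) volume (planarProj θ x) < ∞ := by
    filter_upwards [hμ] with x hx
    have hpair : Measurable fun θ : ℝ => (x, θ) := by fun_prop
    exact ae_lt_top (hmeas.comp hpair :)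
      ((setLIntegral_lowerDensityAlong_map_planarProj_le hI hr x).trans_lt
        (ENNReal.mul_lt_top ENNReal.ofReal_lt_top hx)).ne
  refine ((Measure.ae_ae_comm (measurableSet_lt hmeas measurable_const :)).1 hfinite).mono
    fun θ hθ => ?_
  exact absolutelyContinuous_of_ae_lowerDensityAlong_lt_top hr_gt
    ((ae_map_iff (Continuous.measurable (by fun_prop)).aemeasurable
      (measurableSet_lt (measurable_lowerDensityAlong r _ _) measurable_const)).2 hθ)

lemma ae_map_planarProj_absolutelyContinuous_of_rieszPotential [SFinite μ]
    (hμ : ∀ᵐ x ∂μ, rieszPotential 1 μ x < ∞) :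
    ∀ᵐ θ : ℝ, μ.map (planarProj θ) ≪ volume := by
  have hlocal (n : ℤ) :
      ∀ᵐ θ ∂volume.restrict (Icc (n : ℝ) (n + 1)), μ.map (planarProj θ) ≪ volume := by
    refine ae_restrict_map_planarProj_absolutelyContinuous (fun θ hθ φ hφ => ?_) hμ
    rw [← Real.dist_eq]
    linarith [Real.dist_le_of_mem_Icc hθ hφ, Real.pi_gt_three]
  simpa [iUnion_Icc_intCast] using (ae_restrict_iUnion_iff _ _).2 hlocal

end Projection

theorem stmt_6_general (μ : Measure (EuclideanSpace ℝ (Fin 2))) [SFinite μ] (d : ℝ) (hd : 1 < d)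
    (hμ : μ ≪ μH[d]) :
    ∀ᵐ θ ∂(volume : Measure ℝ),
      Measure.map (fun x : EuclideanSpace ℝ (Fin 2) => x 0 * Real.cos θ + x 1 * Real.sin θ) μ
        ≪ (volume : Measure ℝ) := by
  obtain ⟨ν, hν_finite, hμν, hνμ⟩ := exists_isFiniteMeasure_absolutelyContinuous μ
  have hdensity : ∀ᵐ x ∂ν, upperDensity d ν x < ∞ :=
    (hνμ.trans hμ).ae_le (ae_hausdorffMeasure_upperDensity_lt_top (by linarith) ν)
  have hpotential : ∀ᵐ x ∂ν, rieszPotential 1 ν x < ∞ :=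
    hdensity.mono fun x => rieszPotential_lt_top_of_upperDensity_lt_top one_pos hd
  filter_upwards [ae_map_planarProj_absolutelyContinuous_of_rieszPotential hpotential] with θ hθ
  exact (hμν.map (Continuous.measurable (by fun_prop))).trans hθ

/-- Let K ⊂ ℝ² be a Borel set with Hausdorff dimension d > 1 and
m_d(K) < ∞. For θ ∈ ℝ let μ_θ = (proj_θ)_*(m_d ↾ K) be the pushforward onto the line
L_θ of the restriction of the d-dimensional Hausdorff measure m_d to K. Then for
Lebesgue-almost every θ, μ_θ is absolutely continuous with respect to the 1-dimensional
Lebesgue measure on L_θ. The line L_θ is identified isometrically with ℝ via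
t ↦ t • (cos θ, sin θ), so proj_θ becomes x ↦ x₀ cos θ + x₁ sin θ and the arclength
(Lebesgue) measure on L_θ becomes Lebesgue measure on ℝ. -/
theorem stmt_6 (K : Set (EuclideanSpace ℝ (Fin 2))) (hK : MeasurableSet K)
    (d : ℝ) (hd : 1 < d) (hdim : dimH K = ENNReal.ofReal d)
    (hfin : μH[d] K < ⊤) :
    ∀ᵐ θ ∂(volume : Measure ℝ),
      Measure.map (fun x : EuclideanSpace ℝ (Fin 2) =>
          x 0 * Real.cos θ + x 1 * Real.sin θ) (μH[d].restrict K)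
        ≪ (volume : Measure ℝ) := by
  have : Fact (μH[d] K < ⊤) := ⟨hfin⟩
  exact stmt_6_general _ d hd Measure.absolutelyContinuous_restrict
end
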